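/- arXiv:2203.04620 — 2 statements merged into one kernel-verified Lean document; each statement's English description precedes it below -/
import Mathlib

section
/- If a Gorenstein polytope P is reducible with factors F and G, and P is IDP, then F and G are IDP Gorenstein polytopes. -/
open Pointwise

/-- A point of `ℝ^d` is a lattice point if all its coordinates are integers. -/
def IsLatticePt {d : ℕ} (x : Fin d → ℝ) : Prop := ∀ i, ∃ z : ℤ, x i = (z : ℝ)

/-- A lattice polytope is the (non-empty) convex hull of finitely many lattice points. -/
def IsLatticePolytope {d : ℕ} (P : Set (Fin d → ℝ)) : Prop :=
  ∃ V : Finset (Fin d → ℝ), V.Nonempty ∧ (∀ v ∈ V, IsLatticePt v) ∧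
    P = convexHull ℝ (V : Set (Fin d → ℝ))

/-- The dimension of a polytope: the dimension of the direction of its affine hull. -/
noncomputable def polyDim {d : ℕ} (P : Set (Fin d → ℝ)) : ℕ :=
  Module.finrank ℝ (affineSpan ℝ P).direction

/-- A polytope is hollow if its relative interior contains no lattice point. -/
def IsHollow {d : ℕ} (P : Set (Fin d → ℝ)) : Prop :=
  ∀ x ∈ intrinsicInterior ℝ P, ¬ IsLatticePt x

/-- A facet of `P`: a non-empty exposed face of dimension `dim P - 1`. -/
def IsFacet {d : ℕ} (P F : Set (Fin d → ℝ)) : Prop :=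
  IsExposed ℝ P F ∧ F.Nonempty ∧ polyDim F + 1 = polyDim P

/-- An affine functional is integral on `P` if it takes integer values on all
lattice points of the affine hull of `P`. -/
def IsIntegralOn {d : ℕ} (P : Set (Fin d → ℝ)) (u : (Fin d → ℝ) →ᵃ[ℝ] ℝ) : Prop :=
  ∀ y ∈ affineSpan ℝ P, IsLatticePt y → ∃ z : ℤ, u y = (z : ℝ)

/-- `P` is reflexive: there is a lattice point `x` in the relative interior of `P`
such that every facet of `P` has lattice distance one from `x`, i.e. for every facet `F`
there is an integral affine functional that is constant on `F` and exceeds its value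
at `x` by exactly `1`. -/
def IsReflexivePolytope {d : ℕ} (P : Set (Fin d → ℝ)) : Prop :=
  ∃ x ∈ intrinsicInterior ℝ P, IsLatticePt x ∧
    ∀ F : Set (Fin d → ℝ), IsFacet P F →
      ∃ u : (Fin d → ℝ) →ᵃ[ℝ] ℝ, IsIntegralOn P u ∧ ∀ f ∈ F, u f = u x + 1

/-- `P` is Gorenstein if some positive integer multiple `r • P` is reflexive. -/
def IsGorenstein {d : ℕ} (P : Set (Fin d → ℝ)) : Prop :=
  ∃ r : ℕ, 0 < r ∧ IsReflexivePolytope ((r : ℝ) • P)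

/-- `P` is Gorenstein of codegree `r` if `r • P` is reflexive (`r` positive). -/
def IsGorensteinOfCodeg {d : ℕ} (P : Set (Fin d → ℝ)) (r : ℕ) : Prop :=
  0 < r ∧ IsReflexivePolytope ((r : ℝ) • P)

/-- The codegree of `P`: the smallest positive integer `r` such that `r • P` is not hollow. -/
noncomputable def polyCodeg {d : ℕ} (P : Set (Fin d → ℝ)) : ℕ :=
  sInf {r : ℕ | 0 < r ∧ ¬ IsHollow ((r : ℝ) • P)}

/-- The degree of `P`: `dim P + 1 - codeg P`. -/
noncomputable def polyDeg {d : ℕ} (P : Set (Fin d → ℝ)) : ℕ :=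
  polyDim P + 1 - polyCodeg P

/-- Unimodular equivalence of lattice polytopes: an affine map carrying `P` onto `Q`,
with an affine inverse on affine hulls, such that both maps preserve lattice points of
the affine hulls. -/
def LatticeIso {d e : ℕ} (P : Set (Fin d → ℝ)) (Q : Set (Fin e → ℝ)) : Prop :=
  ∃ (f : (Fin d → ℝ) →ᵃ[ℝ] (Fin e → ℝ)) (g : (Fin e → ℝ) →ᵃ[ℝ] (Fin d → ℝ)),
    f '' P = Q ∧ g '' Q = P ∧
    (∀ x ∈ affineSpan ℝ P, g (f x) = x) ∧ (∀ y ∈ affineSpan ℝ Q, f (g y) = y) ∧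
    (∀ x ∈ affineSpan ℝ P, IsLatticePt x → IsLatticePt (f x)) ∧
    (∀ y ∈ affineSpan ℝ Q, IsLatticePt y → IsLatticePt (g y))

/-- The lattice pyramid `conv(P' × {0}, (0,1))` over `P' ⊆ ℝ^m`. -/
def pyramidOver {m : ℕ} (P' : Set (Fin m → ℝ)) : Set (Fin (m + 1) → ℝ) :=
  convexHull ℝ ((fun x => Fin.snoc x (0 : ℝ)) '' P' ∪ {Fin.snoc (0 : Fin m → ℝ) (1 : ℝ)})

/-- `P` is a lattice pyramid if it is a single lattice point or is isomorphic to a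
lattice pyramid over a lattice polytope. -/
def IsLatticePyramid {d : ℕ} (P : Set (Fin d → ℝ)) : Prop :=
  (∃ x : Fin d → ℝ, IsLatticePt x ∧ P = {x}) ∨
  ∃ (m : ℕ) (P' : Set (Fin m → ℝ)), IsLatticePolytope P' ∧ LatticeIso P (pyramidOver P')

/-- The Cayley polytope `P_1 * ⋯ * P_l ⊆ ℝ^{n+l}` of `P_1, …, P_l ⊆ ℝ^n`:
the convex hull of the sets `P_i × {e_i}`. -/
def cayley {n l : ℕ} (P : Fin l → Set (Fin n → ℝ)) : Set (Fin (n + l) → ℝ) :=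
  convexHull ℝ (⋃ i : Fin l, (fun x => Fin.append x (Pi.single i (1 : ℝ))) '' P i)

/-- The Cayley polytope `F * G ⊆ ℝ^{n+2}` of two polytopes `F, G ⊆ ℝ^n`. -/
def cayleyTwo {n : ℕ} (F G : Set (Fin n → ℝ)) : Set (Fin (n + 2) → ℝ) :=
  convexHull ℝ
    ((fun x => Fin.append x ![(1 : ℝ), 0]) '' F ∪ (fun x => Fin.append x ![(0 : ℝ), 1]) '' G)

/-- `P` is a Cayley join of `F` and `G` if `P ≅ F * G` and `dim F + dim G = dim P - 1`. -/
def IsCayleyJoin {d n : ℕ} (P : Set (Fin d → ℝ)) (F G : Set (Fin n → ℝ)) : Prop :=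
  LatticeIso P (cayleyTwo F G) ∧ polyDim F + polyDim G + 1 = polyDim P

/-- `P` is reducible with factors `F` and `G`: a Cayley join with
`codeg F + codeg G = codeg P`. -/
def IsReducibleWith {d n : ℕ} (P : Set (Fin d → ℝ)) (F G : Set (Fin n → ℝ)) : Prop :=
  IsCayleyJoin P F G ∧ polyCodeg F + polyCodeg G = polyCodeg P

/-- `P` is reducible: it is a single lattice point (by convention) or is reducible
with some factors `F` and `G` which are lattice polytopes. -/
def IsReducible {d : ℕ} (P : Set (Fin d → ℝ)) : Prop :=
  (∃ x : Fin d → ℝ, IsLatticePt x ∧ P = {x}) ∨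
  ∃ (n : ℕ) (F G : Set (Fin n → ℝ)), IsLatticePolytope F ∧ IsLatticePolytope G ∧
    IsReducibleWith P F G

/-- `P` is a Cayley polytope: a single lattice point, or isomorphic to a Cayley polytope
of `l > 1` lattice polytopes. -/
def IsCayleyPolytope {d : ℕ} (P : Set (Fin d → ℝ)) : Prop :=
  (∃ x : Fin d → ℝ, IsLatticePt x ∧ P = {x}) ∨
  ∃ (n l : ℕ) (Q : Fin l → Set (Fin n → ℝ)), 1 < l ∧ (∀ i, IsLatticePolytope (Q i)) ∧
    LatticeIso P (cayley Q)

/-- `P` is IDP if for every `k ≥ 2` every lattice point of `k • P` is a sum of `k`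
lattice points of `P`. -/
def IsIDP {d : ℕ} (P : Set (Fin d → ℝ)) : Prop :=
  ∀ k : ℕ, 2 ≤ k → ∀ x : Fin d → ℝ, IsLatticePt x → x ∈ (k : ℝ) • P →
    ∃ p : Fin k → (Fin d → ℝ), (∀ i, p i ∈ P ∧ IsLatticePt (p i)) ∧ x = ∑ i, p i

/-- The standard simplex `Δ_s = conv(0, e_1, …, e_s) ⊆ ℝ^s`. -/
def stdSimplexLP (s : ℕ) : Set (Fin s → ℝ) :=
  convexHull ℝ (insert 0 (Set.range fun i : Fin s => Pi.single i (1 : ℝ)))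

/-- The product of `F ⊆ ℝ^m` and `G ⊆ ℝ^n` inside `ℝ^{m+n}`. -/
def prodPoly {m n : ℕ} (F : Set (Fin m → ℝ)) (G : Set (Fin n → ℝ)) : Set (Fin (m + n) → ℝ) :=
  (fun p : (Fin m → ℝ) × (Fin n → ℝ) => Fin.append p.1 p.2) '' (F ×ˢ G)

/-- The free join `conv(F × 0 × {0} ∪ 0 × G × {1}) ⊆ ℝ^m × ℝ^n × ℝ`. -/
def freeJoin {m n : ℕ} (F : Set (Fin m → ℝ)) (G : Set (Fin n → ℝ)) :
    Set (Fin (m + n + 1) → ℝ) :=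
  convexHull ℝ
    ((fun x => Fin.snoc (Fin.append x (0 : Fin n → ℝ)) (0 : ℝ)) '' F ∪
     (fun y => Fin.snoc (Fin.append (0 : Fin m → ℝ) y) (1 : ℝ)) '' G)

/-!
Let `a = codeg F` and `b = codeg G`, let `x` and `y` be interior lattice points of `a • F` and
`b • G`, and let `r • P` be reflexive with interior lattice point `z`, where `P = F * G`. Then
`(x + y, a, b)` is an interior lattice point of `(a + b) • P` and `a + b = codeg P ≤ r`. Let `p` be
its dilate to `r • P`. For a facet functional `u` of `r • P` with `u z = 0` and value `1` on the
facet, and a vertex `q` of `P` such that `r • q` lies on that facet, integrality of `u` at the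
interior lattice point `(x + y, a, b) + (r - a - b) • q` of `r • P` gives
`(a + b) * u p ≤ (a + b) - r ≤ 0`. Every direction along `P` has some such `u` increasing along it,
so `p = z`, and then `r = a + b`. For a facet `φ` of `F`, the face `φ * G` is a facet of `F * G`
because the direction spaces of `F` and `G` are independent. Restricting its functional to `a • F`,
embedded by `w ↦ (w + y, a, b)`, shows that `φ` has lattice distance one from `x`, so `a • F` is
reflexive.

The IDP property passes to the faces `F` and `G` of `F * G`.
-/

/-! ### Relative interiors of convex sets -/

section IntrinsicInterior

variable {E E' : Type*} [NormedAddCommGroup E] [NormedSpace ℝ E] {s t : Set E} {x z : E}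

theorem exists_mem_openSegment_of_mem_intrinsicInterior (hx : x ∈ intrinsicInterior ℝ s)
    {q : E} (hq : q ∈ s) : ∃ z ∈ s, x ∈ openSegment ℝ q z := by
  obtain ⟨y, hy, rfl⟩ := mem_intrinsicInterior.1 hx
  have : Nonempty (affineSpan ℝ s) := ⟨y⟩
  let ray : ℝ →ᵃ[ℝ] affineSpan ℝ s := AffineMap.lineMap ⟨q, subset_affineSpan ℝ s hq⟩ y
  have hray : ∀ᶠ r in nhds (1 : ℝ), ray r ∈ interior ((↑) ⁻¹' s : Set (affineSpan ℝ s)) := by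
    refine AffineMap.lineMap_continuous.continuousAt.eventually_mem
      (isOpen_interior.mem_nhds ?_)
    rwa [AffineMap.lineMap_apply_one]
  obtain ⟨r, hr, h1r⟩ :=
    ((hray.filter_mono nhdsWithin_le_nhds).and (self_mem_nhdsWithin (s := Set.Ioi 1))).exists
  have h1r : 1 < r := h1r
  have hrs : ray r ∈ ((↑) ⁻¹' s : Set (affineSpan ℝ s)) := interior_subset hr
  refine ⟨ray r, hrs, ?_⟩
  rw [openSegment_eq_image_lineMap]
  refine ⟨r⁻¹, ⟨by positivity, inv_lt_one_of_one_lt₀ h1r⟩, ?_⟩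
  have hray_r : (ray r : E) = AffineMap.lineMap q (y : E) r := rfl
  rw [hray_r, AffineMap.lineMap_lineMap_right, inv_mul_cancel₀ (by positivity),
    AffineMap.lineMap_apply_one]

theorem openSegment_subset_intrinsicInterior (hs : Convex ℝ s) {w : E}
    (hw : w ∈ intrinsicInterior ℝ s) (hz : z ∈ s) :
    openSegment ℝ z w ⊆ intrinsicInterior ℝ s := by
  rw [openSegment_eq_image_lineMap]
  rintro _ ⟨r, ⟨hr0, hr1⟩, rfl⟩
  obtain ⟨y, hy, rfl⟩ := mem_intrinsicInterior.1 hw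
  have : Nonempty (affineSpan ℝ s) := ⟨y⟩
  let z' : affineSpan ℝ s := ⟨z, subset_affineSpan ℝ s hz⟩
  have hshrink : ∀ v ∈ (↑) ⁻¹' s, AffineMap.lineMap z' v r ∈ ((↑) ⁻¹' s : Set (affineSpan ℝ s)) :=
    fun v hv => hs.lineMap_mem hz hv ⟨hr0.le, hr1.le⟩
  refine mem_intrinsicInterior.2 ⟨AffineMap.lineMap z' y r, mem_interior.2
    ⟨AffineMap.homothety z' r⁻¹ ⁻¹' interior ((↑) ⁻¹' s), fun v hv => ?_,
      isOpen_interior.preimage (AffineMap.homothety_continuous z' r⁻¹), ?_⟩, rfl⟩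
  · have := hshrink _ (interior_subset hv)
    rwa [AffineMap.homothety_eq_lineMap, AffineMap.lineMap_lineMap_right,
      mul_inv_cancel₀ hr0.ne', AffineMap.lineMap_apply_one] at this
  · rwa [Set.mem_preimage, AffineMap.homothety_eq_lineMap, AffineMap.lineMap_lineMap_right,
      inv_mul_cancel₀ hr0.ne', AffineMap.lineMap_apply_one]

theorem mem_intrinsicInterior_iff_exists_mem_openSegment [FiniteDimensional ℝ E]
    (hs : Convex ℝ s) :
    x ∈ intrinsicInterior ℝ s ↔ x ∈ s ∧ ∀ q ∈ s, ∃ z ∈ s, x ∈ openSegment ℝ q z := by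
  refine ⟨fun hx => ⟨intrinsicInterior_subset hx, fun q hq =>
    exists_mem_openSegment_of_mem_intrinsicInterior hx hq⟩, fun ⟨hx, h⟩ => ?_⟩
  obtain ⟨w, hw⟩ := Set.Nonempty.intrinsicInterior hs ⟨x, hx⟩
  obtain ⟨z, hz, hxz⟩ := h w (intrinsicInterior_subset hw)
  exact openSegment_subset_intrinsicInterior hs hw hz (openSegment_symm ℝ w z ▸ hxz)

theorem eqOn_of_isMaxOn_intrinsicInterior (u : E →ᵃ[ℝ] ℝ) (hx : x ∈ intrinsicInterior ℝ s)
    (hmax : IsMaxOn u s x) : ∀ y ∈ s, u y = u x := by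
  intro y hy
  rw [isMaxOn_iff] at hmax
  obtain ⟨z, hz, a, b, ha, hb, hab, hxyz⟩ := exists_mem_openSegment_of_mem_intrinsicInterior hx hy
  have hux : u x = a * u y + b * u z := by
    rw [← hxyz, Convex.combo_affine_apply hab, smul_eq_mul, smul_eq_mul]
  have hux' : u x = a * u x + b * u x := by rw [← add_mul, hab, one_mul]
  refine (hmax y hy).antisymm (le_of_not_gt fun hlt => ?_)
  linarith [mul_lt_mul_of_pos_left hlt ha, mul_le_mul_of_nonneg_left (hmax z hz) hb.le]

theorem map_mem_intrinsicInterior_image [NormedAddCommGroup E'] [NormedSpace ℝ E']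
    [FiniteDimensional ℝ E'] (f : E →ᵃ[ℝ] E') (hs : Convex ℝ s)
    (hx : x ∈ intrinsicInterior ℝ s) : f x ∈ intrinsicInterior ℝ (f '' s) := by
  refine (mem_intrinsicInterior_iff_exists_mem_openSegment (hs.affine_image f)).2
    ⟨Set.mem_image_of_mem f (intrinsicInterior_subset hx), ?_⟩
  rintro _ ⟨q, hq, rfl⟩
  obtain ⟨z, hz, hxz⟩ := exists_mem_openSegment_of_mem_intrinsicInterior hx hq
  exact ⟨f z, Set.mem_image_of_mem f hz, image_openSegment ℝ f q z ▸ Set.mem_image_of_mem f hxz⟩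

variable [FiniteDimensional ℝ E]

theorem smul_mem_intrinsicInterior_smul (hs : Convex ℝ s) (hx : x ∈ intrinsicInterior ℝ s)
    (c : ℝ) : c • x ∈ intrinsicInterior ℝ (c • s) := by
  rw [← Set.image_smul]
  exact map_mem_intrinsicInterior_image (LinearMap.lsmul ℝ E c).toAffineMap hs hx

theorem mem_intrinsicInterior_stdSimplex {ι : Type*} [Fintype ι] {w : ι → ℝ}
    (hw : ∀ i, 0 < w i) (hsum : ∑ i, w i = 1) : w ∈ intrinsicInterior ℝ (stdSimplex ℝ ι) := by
  refine (mem_intrinsicInterior_iff_exists_mem_openSegment (convex_stdSimplex ℝ ι)).2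
    ⟨⟨fun i => (hw i).le, hsum⟩, fun q ⟨hq0, hq1⟩ => ?_⟩
  obtain ⟨τ, hτw, hτ0, hτ1⟩ : ∃ τ : ℝ, (∀ i, τ < w i) ∧ 0 < τ ∧ τ < 1 := by
    have hsmall : ∀ᶠ τ in nhdsWithin (0 : ℝ) (Set.Ioi 0), ∀ i, τ < w i :=
      Filter.eventually_all.2 fun i => nhdsWithin_le_nhds (Iio_mem_nhds (hw i))
    exact (hsmall.and (Ioo_mem_nhdsGT one_pos)).exists
  have hτ1' : 0 < 1 - τ := sub_pos.2 hτ1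
  refine ⟨(1 - τ)⁻¹ • (w - τ • q), ⟨fun i => ?_, ?_⟩, τ, 1 - τ, hτ0, hτ1', by ring, ?_⟩
  · have hqi : q i ≤ 1 := hq1 ▸ Finset.single_le_sum (fun j _ => hq0 j) (Finset.mem_univ i)
    have : 0 ≤ w i - τ * q i := by nlinarith [hτw i]
    simpa using mul_nonneg (inv_nonneg.2 hτ1'.le) this
  · simp only [Pi.smul_apply, Pi.sub_apply, smul_eq_mul, ← Finset.mul_sum, Finset.sum_sub_distrib,
      hsum, hq1, mul_one]
    exact inv_mul_cancel₀ hτ1'.ne'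
  · rw [smul_inv_smul₀ hτ1'.ne', add_sub_cancel]

theorem sum_smul_mem_intrinsicInterior_convexHull_range {ι : Type*} [Fintype ι] (p : ι → E)
    {w : ι → ℝ} (hw : ∀ i, 0 < w i) (hsum : ∑ i, w i = 1) :
    ∑ i, w i • p i ∈ intrinsicInterior ℝ (convexHull ℝ (Set.range p)) := by
  classical
  have himage : Fintype.linearCombination ℝ p '' stdSimplex ℝ ι = convexHull ℝ (Set.range p) := by
    rw [← convexHull_basis_eq_stdSimplex, LinearMap.image_convexHull, ← Set.range_comp]
    congr 2 with i
    simp [Fintype.linearCombination_apply]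
  rw [← himage]
  exact map_mem_intrinsicInterior_image (Fintype.linearCombination ℝ p).toAffineMap
    (convex_stdSimplex ℝ ι) (mem_intrinsicInterior_stdSimplex hw hsum)

theorem smul_add_smul_mem_intrinsicInterior_convexHull_union (hs : Convex ℝ s) (ht : Convex ℝ t)
    {p q : E} (hp : p ∈ intrinsicInterior ℝ s) (hq : q ∈ intrinsicInterior ℝ t) {a b : ℝ}
    (ha : 0 < a) (hb : 0 < b) (hab : a + b = 1) :
    a • p + b • q ∈ intrinsicInterior ℝ (convexHull ℝ (s ∪ t)) := by
  have hps := intrinsicInterior_subset hp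
  have hqt := intrinsicInterior_subset hq
  refine (mem_intrinsicInterior_iff_exists_mem_openSegment (convex_convexHull ℝ _)).2
    ⟨convex_convexHull ℝ _ (subset_convexHull ℝ _ (.inl hps)) (subset_convexHull ℝ _ (.inr hqt))
      ha.le hb.le hab, fun w hw => ?_⟩
  rw [hs.convexHull_union ht ⟨p, hps⟩ ⟨q, hqt⟩, mem_convexJoin] at hw
  obtain ⟨p₁, hp₁, q₁, hq₁, hw⟩ := hw
  obtain ⟨p₂, hp₂, c₁, c₂, hc₁, hc₂, hc, rfl⟩ :=
    exists_mem_openSegment_of_mem_intrinsicInterior hp hp₁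
  obtain ⟨q₂, hq₂, d₁, d₂, hd₁, hd₂, hd, rfl⟩ :=
    exists_mem_openSegment_of_mem_intrinsicInterior hq hq₁
  let v : Fin 4 → E := ![p₁, p₂, q₁, q₂]
  have hv : convexHull ℝ (Set.range v) ⊆ convexHull ℝ (s ∪ t) := by
    refine convexHull_mono (Set.range_subset_iff.2 fun i => ?_)
    fin_cases i
    exacts [.inl hp₁, .inl hp₂, .inr hq₁, .inr hq₂]
  have hwv : w ∈ convexHull ℝ (Set.range v) :=
    (convex_convexHull ℝ _).segment_subset (subset_convexHull ℝ _ (Set.mem_range_self 0))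
      (subset_convexHull ℝ _ (Set.mem_range_self 2)) hw
  have hinterior := sum_smul_mem_intrinsicInterior_convexHull_range v
    (w := ![a * c₁, a * c₂, b * d₁, b * d₂])
    (by
      intro i
      fin_cases i
      exacts [mul_pos ha hc₁, mul_pos ha hc₂, mul_pos hb hd₁, mul_pos hb hd₂])
    (by
      simp only [Fin.sum_univ_four, Matrix.cons_val]
      linear_combination a * hc + b * hd + hab)
  obtain ⟨z, hz, hxz⟩ := exists_mem_openSegment_of_mem_intrinsicInterior hinterior hwv
  refine ⟨z, hv hz, ?_⟩
  convert hxz using 1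
  simp only [v, Fin.sum_univ_four, Matrix.cons_val]
  module

end IntrinsicInterior

/-! ### Lattice points and the codegree -/

section Lattice

variable {d : ℕ} {P : Set (Fin d → ℝ)}

/-- The lattice `ℤ^d`, bundled as an additive subgroup of `ℝ^d`. -/
def latticePoints (d : ℕ) : AddSubgroup (Fin d → ℝ) where
  carrier := {x | IsLatticePt x}
  zero_mem' _ := ⟨0, Int.cast_zero.symm⟩
  add_mem' hx hy i :=
    have ⟨m, hm⟩ := hx i
    have ⟨n, hn⟩ := hy i
    ⟨m + n, by rw [Pi.add_apply, hm, hn, Int.cast_add]⟩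
  neg_mem' hx i :=
    have ⟨m, hm⟩ := hx i
    ⟨-m, by rw [Pi.neg_apply, hm, Int.cast_neg]⟩

theorem IsLatticePt.natCast_smul {x : Fin d → ℝ} (hx : IsLatticePt x) (k : ℕ) :
    IsLatticePt ((k : ℝ) • x) := by
  rw [Nat.cast_smul_eq_nsmul]
  exact (latticePoints d).nsmul_mem hx k

theorem IsLatticePolytope.convex (hP : IsLatticePolytope P) : Convex ℝ P := by
  obtain ⟨V, -, -, rfl⟩ := hP
  exact convex_convexHull ℝ _

theorem IsLatticePolytope.exists_isLatticePt (hP : IsLatticePolytope P) :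
    ∃ v ∈ P, IsLatticePt v := by
  obtain ⟨V, ⟨v, hv⟩, hlat, rfl⟩ := hP
  exact ⟨v, subset_convexHull ℝ _ hv, hlat v hv⟩

theorem IsLatticePolytope.exists_isLatticePt_smul_mem_intrinsicInterior
    (hP : IsLatticePolytope P) :
    ∃ r : ℕ, 0 < r ∧ ∃ p ∈ intrinsicInterior ℝ P, IsLatticePt ((r : ℝ) • p) := by
  obtain ⟨V, hV, hlat, rfl⟩ := hP
  have hcard : 0 < V.card := hV.card_pos
  have hcard' : (V.card : ℝ) ≠ 0 := by positivity
  refine ⟨V.card, hcard, ∑ v : V, (V.card : ℝ)⁻¹ • (v : Fin d → ℝ), ?_, ?_⟩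
  · have := sum_smul_mem_intrinsicInterior_convexHull_range (Subtype.val : V → Fin d → ℝ)
      (w := fun _ => (V.card : ℝ)⁻¹) (fun _ => by positivity) (by simp [hcard'])
    rwa [Subtype.range_coe] at this
  · rw [← Finset.smul_sum, smul_inv_smul₀ hcard']
    exact (latticePoints d).sum_mem fun v _ => hlat v v.2

theorem not_isHollow_smul_iff (hP : Convex ℝ P) {c : ℝ} (hc : c ≠ 0) :
    ¬ IsHollow (c • P) ↔ ∃ p ∈ intrinsicInterior ℝ P, IsLatticePt (c • p) := by
  simp only [IsHollow, not_forall, not_not]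
  constructor
  · rintro ⟨x, hx, hlat⟩
    refine ⟨c⁻¹ • x, ?_, by rwa [smul_inv_smul₀ hc]⟩
    have := smul_mem_intrinsicInterior_smul (hP.smul c) hx c⁻¹
    rwa [inv_smul_smul₀ hc] at this
  · rintro ⟨p, hp, hlat⟩
    exact ⟨c • p, smul_mem_intrinsicInterior_smul hP hp c, hlat⟩

theorem IsLatticePolytope.polyCodeg_spec (hP : IsLatticePolytope P) :
    0 < polyCodeg P ∧ ∃ p ∈ intrinsicInterior ℝ P, IsLatticePt ((polyCodeg P : ℝ) • p) := by
  obtain ⟨r, hr, hp⟩ := hP.exists_isLatticePt_smul_mem_intrinsicInterior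
  have hr' : (r : ℝ) ≠ 0 := by positivity
  have hne : {r : ℕ | 0 < r ∧ ¬ IsHollow ((r : ℝ) • P)}.Nonempty :=
    ⟨r, hr, (not_isHollow_smul_iff hP.convex hr').2 hp⟩
  obtain ⟨hpos, hcodeg⟩ : 0 < polyCodeg P ∧ ¬ IsHollow ((polyCodeg P : ℝ) • P) :=
    Nat.sInf_mem hne
  exact ⟨hpos, (not_isHollow_smul_iff hP.convex (by positivity)).1 hcodeg⟩

end Lattice

/-! ### Vertices of the polar polytope -/

section Polar

variable {ι E : Type*} [AddCommGroup E] [Module ℝ E] {p : ι → E}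

/-- The polar `{h | ∀ i, h (p i) ≤ 1}` of a family of points, each functional `h` being recorded
by its values `(h (p i))ᵢ`, so that the polar of a finite family lies in the finite-dimensional
space `ι → ℝ`. -/
def polarValues (p : ι → E) : Set (ι → ℝ) :=
  ((LinearMap.pi fun i => Module.Dual.eval ℝ E (p i)).range : Set (ι → ℝ)) ∩ Set.Iic 1

theorem mem_polarValues {h : Module.Dual ℝ E} :
    (fun i => h (p i)) ∈ polarValues p ↔ ∀ i, h (p i) ≤ 1 :=
  and_iff_right ⟨h, rfl⟩

theorem convex_polarValues : Convex ℝ (polarValues p) :=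
  (Submodule.convex _).inter (convex_Iic 1)

theorem bddBelow_polarValues
    (hp : ∀ i, ∃ z ∈ convexHull ℝ (Set.range p), 0 ∈ openSegment ℝ (p i) z) :
    BddBelow (polarValues p) := by
  choose z hz a b ha hb _ hab using hp
  refine ⟨fun i => -(b i / a i), ?_⟩
  rintro _ ⟨⟨h, rfl⟩, hle⟩ i
  have hzi : h (z i) ≤ 1 := by
    refine convexHull_min (Set.range_subset_iff.2 fun j => ?_) (convex_halfSpace_le h.isLinear 1)
      (hz i)
    exact hle j
  have hsum : a i * h (p i) + b i * h (z i) = 0 := by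
    simpa only [map_add, map_smul, smul_eq_mul, map_zero] using congrArg h (hab i)
  change -(b i / a i) ≤ h (p i)
  rw [← neg_div, div_le_iff₀ (ha i)]
  linarith [mul_le_mul_of_nonneg_left hzi (hb i).le]

theorem isCompact_polarValues [Finite ι]
    (hp : ∀ i, ∃ z ∈ convexHull ℝ (Set.range p), 0 ∈ openSegment ℝ (p i) z) :
    IsCompact (polarValues p) := by
  obtain ⟨m, hm⟩ := bddBelow_polarValues hp
  exact (isCompact_Icc (a := m) (b := 1)).of_isClosed_subset
    ((Submodule.closed_of_finiteDimensional _).inter isClosed_Iic) fun c hc => ⟨hm hc, hc.2⟩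

theorem span_range_le_span_of_mem_extremePoints [Finite ι] {h : Module.Dual ℝ E}
    (hext : (fun i => h (p i)) ∈ (polarValues p).extremePoints ℝ) :
    Submodule.span ℝ (Set.range p) ≤ Submodule.span ℝ (p '' {i | h (p i) = 1}) := by
  rw [Submodule.span_le, Set.range_subset_iff]
  by_contra! ⟨j, hj⟩
  obtain ⟨g, hgj, hg⟩ := Submodule.exists_le_ker_of_notMem hj
  rw [mem_extremePoints_iff_left] at hext
  obtain ⟨hmem, hext⟩ := hext
  have hsmall : ∀ᶠ ε in nhdsWithin (0 : ℝ) (Set.Ioi 0), ∀ i, h (p i) + ε * |g (p i)| ≤ 1 := by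
    refine Filter.eventually_all.2 fun i => ?_
    rcases (mem_polarValues.1 hmem i).eq_or_lt with hi | hi
    · have hgi : g (p i) = 0 := hg (Submodule.subset_span ⟨i, hi, rfl⟩)
      simp [hgi, hi]
    · have hcont : Filter.Tendsto (fun ε : ℝ => h (p i) + ε * |g (p i)|) (nhds 0)
          (nhds (h (p i) + 0 * |g (p i)|)) := Continuous.tendsto (by fun_prop) 0
      rw [zero_mul, add_zero] at hcont
      exact nhdsWithin_le_nhds (hcont.eventually_le_const hi)
  obtain ⟨ε, hε, hε0⟩ := (hsmall.and self_mem_nhdsWithin).exists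
  have hε0 : 0 < ε := hε0
  have hperturb : ∀ δ : ℝ, |δ| = ε → (fun i => (h + δ • g) (p i)) ∈ polarValues p := by
    refine fun δ hδ => mem_polarValues.2 fun i => (add_le_add_right ?_ _).trans (hε i)
    rw [← hδ, ← abs_mul]
    exact le_abs_self _
  have hmid := hext _ (hperturb ε (abs_of_pos hε0)) _
    (hperturb (-ε) (by rw [abs_neg, abs_of_pos hε0]))
    ⟨2⁻¹, 2⁻¹, by norm_num, by norm_num, by norm_num, by
      ext i
      simp only [Pi.add_apply, Pi.smul_apply, LinearMap.add_apply, LinearMap.smul_apply,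
        smul_eq_mul]
      ring⟩
  have hgj' : ε * g (p j) = 0 := by simpa using congrFun hmid j
  exact hgj ((mul_eq_zero.1 hgj').resolve_left hε0.ne')

theorem exists_smul_mem_polarValues [Finite ι] (g : Module.Dual ℝ E) :
    ∃ ε : ℝ, 0 < ε ∧ (fun i => (ε • g) (p i)) ∈ polarValues p := by
  have hsmall : ∀ᶠ ε in nhdsWithin (0 : ℝ) (Set.Ioi 0), ∀ i, ε * g (p i) ≤ 1 := by
    refine Filter.eventually_all.2 fun i => nhdsWithin_le_nhds ?_
    have hcont : Filter.Tendsto (fun ε : ℝ => ε * g (p i)) (nhds 0) (nhds (0 * g (p i))) :=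
      Continuous.tendsto (by fun_prop) 0
    rw [zero_mul] at hcont
    exact hcont.eventually_le_const one_pos
  obtain ⟨ε, hε, hε0⟩ := (hsmall.and self_mem_nhdsWithin).exists
  exact ⟨ε, hε0, mem_polarValues.2 hε⟩

/-- The functional is found among the vertices of the polar: they generate the polar by the
Krein-Milman theorem, so one of them is positive at `e`. -/
theorem exists_dual_pos_and_span_range_le_span [Finite ι]
    (hp : ∀ i, ∃ z ∈ convexHull ℝ (Set.range p), 0 ∈ openSegment ℝ (p i) z)
    {e : E} (he : e ∈ Submodule.span ℝ (Set.range p)) (he0 : e ≠ 0) :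
    ∃ h : Module.Dual ℝ E, (∀ i, h (p i) ≤ 1) ∧ 0 < h e ∧
      Submodule.span ℝ (Set.range p) ≤ Submodule.span ℝ (p '' {i | h (p i) = 1}) := by
  have := Fintype.ofFinite ι
  obtain ⟨α, rfl⟩ := (Submodule.mem_span_range_iff_exists_fun ℝ).1 he
  by_contra! H
  let ev : (ι → ℝ) →ₗ[ℝ] ℝ := Fintype.linearCombination ℝ α
  have hev (h : Module.Dual ℝ E) : ev (fun i => h (p i)) = h (∑ i, α i • p i) := by
    simp [ev, Fintype.linearCombination_apply, mul_comm]
  have hextreme : (polarValues p).extremePoints ℝ ⊆ {c | ev c ≤ 0} := by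
    intro c hc
    obtain ⟨⟨⟨h, rfl⟩, hle⟩, -⟩ := id hc
    refine (hev h).trans_le (le_of_not_gt fun hpos => ?_)
    exact H h hle hpos (span_range_le_span_of_mem_extremePoints hc)
  have hpolar : polarValues p ⊆ {c | ev c ≤ 0} := by
    rw [← closure_convexHull_extremePoints (isCompact_polarValues hp) convex_polarValues]
    exact closure_minimal (convexHull_min hextreme (convex_halfSpace_le ev.isLinear 0))
      (isClosed_le ev.continuous_of_finiteDimensional continuous_const)
  have hnonpos (g : Module.Dual ℝ E) : g (∑ i, α i • p i) ≤ 0 := by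
    obtain ⟨ε, hε, hmem⟩ := exists_smul_mem_polarValues (p := p) g
    have hle : ε * g (∑ i, α i • p i) ≤ 0 := (hev (ε • g)).symm.trans_le (hpolar hmem)
    exact nonpos_of_mul_nonpos_right hle hε
  refine he0 ((Module.forall_dual_apply_eq_zero_iff ℝ _).1 fun g => (hnonpos g).antisymm ?_)
  simpa using hnonpos (-g)

end Polar

/-! ### Faces and facets -/

section Face

variable {E : Type*} [NormedAddCommGroup E] [NormedSpace ℝ E] {s : Set E} {x : E}

theorem isExposed_sep_eq [FiniteDimensional ℝ E] {u : E →ᵃ[ℝ] ℝ} {c : ℝ} (hle : ∀ z ∈ s, u z ≤ c) :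
    IsExposed ℝ s {z ∈ s | u z = c} := by
  rintro ⟨p, hp, hpc⟩
  have hu (z) : u.linear.toContinuousLinearMap z = u z - u 0 := congrFun u.decomp' z
  refine ⟨u.linear.toContinuousLinearMap, ?_⟩
  ext z
  simp only [Set.mem_ofPred_eq, hu, sub_le_sub_iff_right, and_congr_right_iff]
  exact fun hz => ⟨fun h y hy => h ▸ hle y hy, fun h => (hle z hz).antisymm (hpc ▸ h p hp)⟩

theorem exists_affineMap_pos_and_subset_affineSpan {V : Set E} (hV : V.Finite)
    (hx : x ∈ intrinsicInterior ℝ (convexHull ℝ V)) {e : E} (he : e ∈ vectorSpan ℝ V)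
    (he0 : e ≠ 0) :
    ∃ u : E →ᵃ[ℝ] ℝ, u x = 0 ∧ 0 < u.linear e ∧ (∀ z ∈ convexHull ℝ V, u z ≤ 1) ∧
      V ⊆ affineSpan ℝ (insert x {v ∈ V | u v = 1}) := by
  have := hV.to_subtype
  let τ : E →ᵃ[ℝ] E := AffineMap.id ℝ _ - AffineMap.const ℝ _ x
  let p : V → E := fun v => τ v
  have hrange : Set.range p = τ '' V := by rw [Set.image_eq_range]
  have hp : ∀ v, ∃ z ∈ convexHull ℝ (Set.range p), 0 ∈ openSegment ℝ (p v) z := by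
    intro v
    obtain ⟨z, hz, hxz⟩ :=
      exists_mem_openSegment_of_mem_intrinsicInterior hx (subset_convexHull ℝ V v.2)
    refine ⟨τ z, ?_, ?_⟩
    · rw [hrange, ← AffineMap.image_convexHull]
      exact Set.mem_image_of_mem τ hz
    · rw [← image_openSegment]
      exact ⟨x, hxz, sub_self x⟩
  have hspan : vectorSpan ℝ V ≤ Submodule.span ℝ (Set.range p) := by
    rw [vectorSpan_def, Submodule.span_le]
    rintro _ ⟨v, hv, w, hw, rfl⟩
    have hvw : v - w = p ⟨v, hv⟩ - p ⟨w, hw⟩ := (sub_sub_sub_cancel_right v w x).symm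
    change v - w ∈ Submodule.span ℝ (Set.range p)
    rw [hvw]
    exact Submodule.sub_mem _ (Submodule.subset_span (Set.mem_range_self _))
      (Submodule.subset_span (Set.mem_range_self _))
  obtain ⟨h, hle, hhe, hactive⟩ := exists_dual_pos_and_span_range_le_span hp (hspan he) he0
  let u : E →ᵃ[ℝ] ℝ := h.toAffineMap.comp τ
  refine ⟨u, ?_, ?_, fun z hz => ?_, fun v hv => ?_⟩
  · exact (congrArg h (sub_self x)).trans h.map_zero
  · simpa [u, τ] using hhe
  · exact convexHull_min (fun v hv => hle ⟨v, hv⟩) ((convex_Iic 1).affine_preimage u) hz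
  · have hdir : v -ᵥ x ∈ (affineSpan ℝ (insert x {v ∈ V | u v = 1})).direction := by
      rw [direction_affineSpan, vectorSpan_eq_span_vsub_set_right ℝ (Set.mem_insert x _)]
      refine Submodule.span_mono ?_ (hactive (Submodule.subset_span ⟨⟨v, hv⟩, rfl⟩))
      rintro _ ⟨w, hw, rfl⟩
      exact ⟨w, .inr ⟨w.2, hw⟩, rfl⟩
    simpa using AffineSubspace.vadd_mem_of_mem_direction hdir
      (subset_affineSpan ℝ _ (Set.mem_insert x _))

end Face

section Facet

variable {d : ℕ} {P Q : Set (Fin d → ℝ)} {x : Fin d → ℝ}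

theorem polyDim_eq_finrank_vectorSpan (P : Set (Fin d → ℝ)) :
    polyDim P = Module.finrank ℝ (vectorSpan ℝ P) := by
  rw [polyDim, direction_affineSpan]

theorem polyDim_mono (h : P ⊆ Q) : polyDim P ≤ polyDim Q :=
  Submodule.finrank_mono (AffineSubspace.direction_le (affineSpan_mono ℝ h))

theorem isFacet_sep_eq {u : (Fin d → ℝ) →ᵃ[ℝ] ℝ} {c : ℝ} (hle : ∀ z ∈ P, u z ≤ c)
    (hne : {z ∈ P | u z = c}.Nonempty) (hx : x ∈ P) (hux : u x < c)
    (hdim : polyDim P ≤ polyDim {z ∈ P | u z = c} + 1) : IsFacet P {z ∈ P | u z = c} := by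
  obtain ⟨p, hp, hpc⟩ := id hne
  have hker : vectorSpan ℝ {z ∈ P | u z = c} ≤ u.linear.ker := by
    rw [vectorSpan_def, Submodule.span_le]
    rintro _ ⟨y, hy, z, hz, rfl⟩
    rw [SetLike.mem_coe, LinearMap.mem_ker, AffineMap.linearMap_vsub, hy.2, hz.2, vsub_self]
  have hlt : vectorSpan ℝ {z ∈ P | u z = c} < vectorSpan ℝ P := by
    refine (vectorSpan_mono ℝ (Set.sep_subset _ _)).lt_of_not_ge fun hge => ?_
    have := hker (hge (vsub_mem_vectorSpan ℝ hx hp))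
    rw [LinearMap.mem_ker, AffineMap.linearMap_vsub, hpc, vsub_eq_sub, sub_eq_zero] at this
    exact hux.ne this
  have := Submodule.finrank_lt_finrank_of_lt hlt
  rw [← polyDim_eq_finrank_vectorSpan, ← polyDim_eq_finrank_vectorSpan] at this
  exact ⟨isExposed_sep_eq hle, hne, by omega⟩

theorem exists_isFacet_sep_eq_one {V : Set (Fin d → ℝ)} (hV : V.Finite)
    (hx : x ∈ intrinsicInterior ℝ (convexHull ℝ V)) {e : Fin d → ℝ} (he : e ∈ vectorSpan ℝ V)
    (he0 : e ≠ 0) :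
    ∃ u : (Fin d → ℝ) →ᵃ[ℝ] ℝ, u x = 0 ∧ 0 < u.linear e ∧ (∀ z ∈ convexHull ℝ V, u z ≤ 1) ∧
      (∃ v ∈ V, u v = 1) ∧ IsFacet (convexHull ℝ V) {z ∈ convexHull ℝ V | u z = 1} ∧
      affineSpan ℝ V ≤ affineSpan ℝ (insert x {z ∈ convexHull ℝ V | u z = 1}) := by
  obtain ⟨u, hux, hue, hle, hspan⟩ := exists_affineMap_pos_and_subset_affineSpan hV hx he he0
  set A := {v ∈ V | u v = 1}
  have hVA : vectorSpan ℝ V ≤ vectorSpan ℝ (insert x A) := by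
    simpa only [direction_affineSpan] using
      AffineSubspace.direction_le (affineSpan_le.2 hspan)
  have hA : A.Nonempty := by
    rw [Set.nonempty_iff_ne_empty]
    intro hA
    rw [hA, insert_empty_eq, vectorSpan_singleton, le_bot_iff] at hVA
    exact he0 ((Submodule.mem_bot ℝ).1 (hVA ▸ he))
  have hAface : A ⊆ {z ∈ convexHull ℝ V | u z = 1} :=
    fun v hv => ⟨subset_convexHull ℝ V hv.1, hv.2⟩
  refine ⟨u, hux, hue, hle, hA, isFacet_sep_eq hle (hA.mono hAface) (intrinsicInterior_subset hx)
    (hux.trans_lt one_pos) ?_, (affineSpan_le.2 hspan).trans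
      (affineSpan_mono ℝ (Set.insert_subset_insert hAface))⟩
  calc polyDim (convexHull ℝ V) = Module.finrank ℝ (vectorSpan ℝ V) := by
        rw [polyDim, affineSpan_convexHull, direction_affineSpan]
    _ ≤ Module.finrank ℝ (vectorSpan ℝ (insert x A)) := Submodule.finrank_mono hVA
    _ ≤ Module.finrank ℝ (vectorSpan ℝ A) + 1 := finrank_vectorSpan_insert_le_set ℝ A x
    _ ≤ polyDim {z ∈ convexHull ℝ V | u z = 1} + 1 := by
        rw [← polyDim_eq_finrank_vectorSpan]
        exact Nat.add_le_add_right (polyDim_mono hAface) 1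

end Facet

/-! ### Reflexive polytopes -/

section Reflexive

variable {d : ℕ} {P : Set (Fin d → ℝ)} {x y : Fin d → ℝ}

/-- `P` is reflexive with interior lattice point `x`: every facet of `P` has lattice distance one
from `x`. -/
structure IsReflexiveAt (P : Set (Fin d → ℝ)) (x : Fin d → ℝ) : Prop where
  mem_intrinsicInterior : x ∈ intrinsicInterior ℝ P
  isLatticePt : IsLatticePt x
  exists_isIntegralOn : ∀ F, IsFacet P F →
    ∃ u : (Fin d → ℝ) →ᵃ[ℝ] ℝ, IsIntegralOn P u ∧ ∀ f ∈ F, u f = u x + 1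

theorem isReflexivePolytope_iff_exists_isReflexiveAt :
    IsReflexivePolytope P ↔ ∃ x, IsReflexiveAt P x :=
  ⟨fun ⟨x, hx, hlat, h⟩ => ⟨x, hx, hlat, h⟩, fun ⟨x, hx, hlat, h⟩ => ⟨x, hx, hlat, h⟩⟩

theorem IsReflexiveAt.exists_isIntegralOn_linear_pos {V : Set (Fin d → ℝ)} (hV : V.Finite)
    (h : IsReflexiveAt (convexHull ℝ V) x) {e : Fin d → ℝ} (he : e ∈ vectorSpan ℝ V)
    (he0 : e ≠ 0) :
    ∃ u : (Fin d → ℝ) →ᵃ[ℝ] ℝ, IsIntegralOn (convexHull ℝ V) u ∧ u x = 0 ∧ 0 < u.linear e ∧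
      (∀ z ∈ convexHull ℝ V, u z ≤ 1) ∧ ∃ v ∈ V, u v = 1 := by
  obtain ⟨u, hux, hue, hle, hvertex, hfacet, hspan⟩ :=
    exists_isFacet_sep_eq_one hV h.mem_intrinsicInterior he he0
  obtain ⟨u', hint, hu'⟩ := h.exists_isIntegralOn _ hfacet
  refine ⟨u, fun z hz hzlat => ?_, hux, hue, hle, hvertex⟩
  have hagree : Set.EqOn (u' - AffineMap.const ℝ (Fin d → ℝ) (u' x)) u
      (insert x {z ∈ convexHull ℝ V | u z = 1}) := by
    rintro w (rfl | hw)
    · simp [hux]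
    · simp [hu' w hw, hw.2]
  have huz : u' z - u' x = u z := by
    rw [affineSpan_convexHull] at hz
    exact AffineMap.eqOn_affineSpan hagree (hspan hz)
  obtain ⟨m, hm⟩ := hint z hz hzlat
  have hx := intrinsicInterior_subset h.mem_intrinsicInterior
  obtain ⟨n, hn⟩ := hint x (subset_affineSpan ℝ _ hx) h.isLatticePt
  exact ⟨m - n, by rw [← huz, hm, hn, Int.cast_sub]⟩

theorem IsReflexiveAt.exists_isIntegralOn_linear_pos_of_smul (hP : IsLatticePolytope P) {c : ℝ}
    (h : IsReflexiveAt (c • P) x) {e : Fin d → ℝ} (he : e ∈ vectorSpan ℝ (c • P))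
    (he0 : e ≠ 0) :
    ∃ u : (Fin d → ℝ) →ᵃ[ℝ] ℝ, IsIntegralOn (c • P) u ∧ u x = 0 ∧ 0 < u.linear e ∧
      (∀ z ∈ c • P, u z ≤ 1) ∧ ∃ q ∈ P, IsLatticePt q ∧ u (c • q) = 1 := by
  obtain ⟨V, -, hVlat, rfl⟩ := hP
  rw [← convexHull_smul] at h he ⊢
  rw [← direction_affineSpan, affineSpan_convexHull, direction_affineSpan] at he
  obtain ⟨u, hint, hux, hue, hle, _, ⟨q, hq, rfl⟩, huq⟩ :=
    h.exists_isIntegralOn_linear_pos (V.finite_toSet.image (c • ·)) he he0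
  exact ⟨u, hint, hux, hue, hle, q, subset_convexHull ℝ _ hq, hVlat q hq, huq⟩

/-- The integer `u (s • y + (r - s) • q)` is less than `1`. -/
theorem IsIntegralOn.mul_apply_smul_le {r s : ℕ} (hs : 0 < s) (hsr : s ≤ r) (hP : Convex ℝ P)
    {u : (Fin d → ℝ) →ᵃ[ℝ] ℝ} (hu : IsIntegralOn ((r : ℝ) • P) u) (hy : y ∈ P)
    (hylat : IsLatticePt ((s : ℝ) • y)) (huy : u ((r : ℝ) • y) < 1) {q : Fin d → ℝ} (hq : q ∈ P)
    (hqlat : IsLatticePt q) (huq : u ((r : ℝ) • q) = 1) :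
    s * u ((r : ℝ) • y) ≤ s - r := by
  have hs' : (0 : ℝ) < s := Nat.cast_pos.2 hs
  have hsr' : (s : ℝ) ≤ r := Nat.cast_le.2 hsr
  have hr' : (0 : ℝ) < r := hs'.trans_le hsr'
  have hcomb : (s / r : ℝ) + (r - s) / r = 1 := by field_simp; ring
  set z := (s : ℝ) • y + ((r : ℝ) - s) • q with hz_def
  have hz : z = (s / r : ℝ) • (r : ℝ) • y + ((r - s) / r : ℝ) • (r : ℝ) • q := by
    rw [smul_smul, smul_smul, div_mul_cancel₀ _ hr'.ne', div_mul_cancel₀ _ hr'.ne']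
  have hzP : z ∈ (r : ℝ) • P := by
    rw [hz]
    exact hP.smul (r : ℝ) (Set.smul_mem_smul_set hy) (Set.smul_mem_smul_set hq) (by positivity)
      (div_nonneg (sub_nonneg.2 hsr') hr'.le) hcomb
  have hzlat : IsLatticePt z := by
    rw [hz_def, ← Nat.cast_sub hsr]
    exact (latticePoints d).add_mem hylat (hqlat.natCast_smul _)
  have huz : r * u z = s * u ((r : ℝ) • y) + (r - s) := by
    rw [hz, Convex.combo_affine_apply hcomb, huq, smul_eq_mul, smul_eq_mul]
    field_simp
  obtain ⟨k, hk⟩ := hu z (subset_affineSpan ℝ _ hzP) hzlat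
  have hk1 : (k : ℝ) < 1 := by
    rw [← hk]
    refine lt_of_mul_lt_mul_left ?_ hr'.le
    linarith [mul_lt_mul_of_pos_left huy hs']
  have hk0 : (k : ℝ) ≤ 0 := by exact_mod_cast Int.lt_add_one_iff.1 (by exact_mod_cast hk1)
  rw [hk] at huz
  linarith [mul_nonpos_of_nonneg_of_nonpos hr'.le hk0]

theorem IsReflexiveAt.exists_linear_pos_and_mul_apply_smul_le {r s : ℕ} (hs : 0 < s)
    (hsr : s ≤ r) (hP : IsLatticePolytope P) (h : IsReflexiveAt ((r : ℝ) • P) x)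
    (hy : y ∈ intrinsicInterior ℝ P) (hylat : IsLatticePt ((s : ℝ) • y)) {e : Fin d → ℝ}
    (he : e ∈ vectorSpan ℝ ((r : ℝ) • P)) (he0 : e ≠ 0) :
    ∃ u : (Fin d → ℝ) →ᵃ[ℝ] ℝ, u x = 0 ∧ 0 < u.linear e ∧ s * u ((r : ℝ) • y) ≤ s - r := by
  obtain ⟨u, hint, hux, hue, hle, q, hq, hqlat, huq⟩ :=
    h.exists_isIntegralOn_linear_pos_of_smul hP he he0
  have hry := smul_mem_intrinsicInterior_smul hP.convex hy r
  have huy : u ((r : ℝ) • y) < 1 := by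
    refine (hle _ (intrinsicInterior_subset hry)).lt_of_ne fun h1 => ?_
    have := eqOn_of_isMaxOn_intrinsicInterior u hry (isMaxOn_iff.2 fun z hz => h1 ▸ hle z hz) x
      (intrinsicInterior_subset h.mem_intrinsicInterior)
    linarith
  exact ⟨u, hux, hue, hint.mul_apply_smul_le hs hsr hP.convex (intrinsicInterior_subset hy) hylat
    huy hq hqlat huq⟩

theorem IsReflexiveAt.eq_of_isLatticePt_smul {r s : ℕ} (hs : 0 < s) (hsr : s ≤ r)
    (hP : IsLatticePolytope P) (hnt : P.Nontrivial) (h : IsReflexiveAt ((r : ℝ) • P) x)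
    (hy : y ∈ intrinsicInterior ℝ P) (hylat : IsLatticePt ((s : ℝ) • y)) :
    r = s ∧ x = (r : ℝ) • y := by
  have hs' : (0 : ℝ) < s := Nat.cast_pos.2 hs
  have hsr' : (s : ℝ) ≤ r := Nat.cast_le.2 hsr
  have hxP := intrinsicInterior_subset h.mem_intrinsicInterior
  have hxy : x = (r : ℝ) • y := by
    by_contra hne
    obtain ⟨u, hux, hue, hle⟩ := h.exists_linear_pos_and_mul_apply_smul_le hs hsr hP hy hylat
      (vsub_mem_vectorSpan ℝ (Set.smul_mem_smul_set (intrinsicInterior_subset hy)) hxP)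
      (sub_ne_zero.2 (Ne.symm hne))
    rw [AffineMap.linearMap_vsub, hux, vsub_eq_sub, sub_zero] at hue
    nlinarith [mul_pos hs' hue]
  obtain ⟨p, hp, q, hq, hpq⟩ := hnt
  have hr' : (r : ℝ) ≠ 0 := (hs'.trans_le hsr').ne'
  obtain ⟨u, hux, -, hle⟩ := h.exists_linear_pos_and_mul_apply_smul_le hs hsr hP hy hylat
    (vsub_mem_vectorSpan ℝ (Set.smul_mem_smul_set hp) (Set.smul_mem_smul_set hq))
    (sub_ne_zero.2 ((smul_right_injective _ hr').ne hpq))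
  rw [← hxy, hux, mul_zero, sub_nonneg, Nat.cast_le] at hle
  exact ⟨hle.antisymm hsr, hxy⟩

end Reflexive

/-! ### Affine maps and dilates -/

section Dilate

variable {E E' : Type*} [AddCommGroup E] [Module ℝ E] [AddCommGroup E'] [Module ℝ E'] {s : Set E}

theorem apply_mem_affineSpan_image (f : E →ᵃ[ℝ] E') {x : E} (hx : x ∈ affineSpan ℝ s) :
    f x ∈ affineSpan ℝ (f '' s) := by
  rw [← AffineSubspace.map_span]
  exact AffineSubspace.mem_map_of_mem f hx

theorem exists_mem_affineSpan_smul_eq {c : ℝ} {z : E} (hz : z ∈ affineSpan ℝ (c • s)) :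
    ∃ x ∈ affineSpan ℝ s, c • x = z := by
  have himage : c • s = (LinearMap.lsmul ℝ E c).toAffineMap '' s := by
    rw [← Set.image_smul]
    rfl
  rwa [himage, ← AffineSubspace.map_span] at hz

/-- The affine map `c • x ↦ c • f x` induced by `f` on dilates. -/
def dilateMap (f : E →ᵃ[ℝ] E') (c : ℝ) : E →ᵃ[ℝ] E' :=
  f.linear.toAffineMap + AffineMap.const ℝ _ (c • f 0)

theorem dilateMap_apply (f : E →ᵃ[ℝ] E') (c : ℝ) (z : E) :
    dilateMap f c z = f.linear z + c • f 0 := rfl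

theorem dilateMap_smul (f : E →ᵃ[ℝ] E') (c : ℝ) (x : E) : dilateMap f c (c • x) = c • f x := by
  rw [dilateMap_apply, map_smul, ← smul_add, congrFun f.decomp x]
  rfl

theorem dilateMap_image_smul (f : E →ᵃ[ℝ] E') (c : ℝ) (s : Set E) :
    dilateMap f c '' (c • s) = c • f '' s := by
  simp only [← Set.image_smul, Set.image_image, dilateMap_smul]

theorem dilateMap_sum (f : E →ᵃ[ℝ] E') {m : ℕ} (p : Fin m → E) :
    dilateMap f m (∑ i, p i) = ∑ i, f (p i) := by
  have hf (x) : f x = f.linear x + f 0 := congrFun f.decomp x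
  simp [dilateMap_apply, hf (p _), Finset.sum_add_distrib, Nat.cast_smul_eq_nsmul]

end Dilate

/-! ### Lattice isomorphisms -/

section LatticeIso

variable {d e k : ℕ} {P φ : Set (Fin d → ℝ)} {Q : Set (Fin e → ℝ)} {R : Set (Fin k → ℝ)}
  {f : (Fin d → ℝ) →ᵃ[ℝ] (Fin e → ℝ)} {g : (Fin e → ℝ) →ᵃ[ℝ] (Fin d → ℝ)}

theorem polyDim_image_le (f : (Fin d → ℝ) →ᵃ[ℝ] (Fin e → ℝ)) (P : Set (Fin d → ℝ)) :
    polyDim (f '' P) ≤ polyDim P := by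
  rw [polyDim, ← AffineSubspace.map_span, AffineSubspace.map_direction]
  exact Submodule.finrank_map_le _ _

theorem polyDim_image_of_leftInvOn (h : Set.LeftInvOn g f P) : polyDim (f '' P) = polyDim P := by
  refine (polyDim_image_le f P).antisymm ?_
  calc polyDim P = polyDim (g '' (f '' P)) := by rw [h.image_image]
    _ ≤ polyDim (f '' P) := polyDim_image_le g _

theorem IsFacet.image_of_leftInvOn (hφ : IsFacet P φ) (h : Set.LeftInvOn g f P) :
    IsFacet (f '' P) (f '' φ) := by
  obtain ⟨hexp, hne, hdim⟩ := hφ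
  have hsub : φ ⊆ P := hexp.subset
  obtain ⟨l, hl⟩ := hexp hne
  refine ⟨fun _ => ⟨l.comp g.linear.toContinuousLinearMap, ?_⟩, hne.image f, ?_⟩
  · have hlg : ∀ x ∈ P, l (g.linear (f x)) = l x - l (g 0) := fun x hx => by
      rw [← map_sub, congrFun g.decomp' (f x), Pi.sub_apply, h hx]
    ext z
    constructor
    · rintro ⟨x, hx, rfl⟩
      refine ⟨Set.mem_image_of_mem f (hsub hx), ?_⟩
      rintro _ ⟨y, hy, rfl⟩
      simpa [hlg y hy, hlg x (hsub hx)] using (hl ▸ hx : x ∈ {x ∈ P | ∀ y ∈ P, l y ≤ l x}).2 y hy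
    · rintro ⟨⟨x, hx, rfl⟩, hmax⟩
      refine Set.mem_image_of_mem f (hl ▸ ⟨hx, fun y hy => ?_⟩)
      simpa [hlg y hy, hlg x hx] using hmax _ (Set.mem_image_of_mem f hy)
  · rw [polyDim_image_of_leftInvOn h, polyDim_image_of_leftInvOn (h.mono hsub), hdim]

theorem IsFacet.smul (hφ : IsFacet P φ) {c : ℝ} (hc : c ≠ 0) : IsFacet (c • P) (c • φ) :=
  hφ.image_of_leftInvOn (f := (LinearMap.lsmul ℝ (Fin d → ℝ) c).toAffineMap)
    (g := (LinearMap.lsmul ℝ (Fin d → ℝ) c⁻¹).toAffineMap) fun x _ => inv_smul_smul₀ hc x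

theorem LatticeIso.trans (h : LatticeIso P Q) (h' : LatticeIso Q R) : LatticeIso P R := by
  obtain ⟨f, g, rfl, hgQ, hgf, hfg, hf, hg⟩ := h
  obtain ⟨f', g', rfl, hgR, hgf', hfg', hf', hg'⟩ := h'
  have hfspan : ∀ x ∈ affineSpan ℝ P, f x ∈ affineSpan ℝ (f '' P) := fun x =>
    apply_mem_affineSpan_image f
  have hgspan : ∀ z ∈ affineSpan ℝ (f' '' (f '' P)), g' z ∈ affineSpan ℝ (f '' P) := fun z hz =>
    hgR ▸ apply_mem_affineSpan_image g' hz
  refine ⟨f'.comp f, g.comp g', ?_, ?_, fun x hx => ?_, fun z hz => ?_, fun x hx hlat => ?_,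
    fun z hz hlat => ?_⟩
  · rw [AffineMap.coe_comp, Set.image_comp]
  · rw [AffineMap.coe_comp, Set.image_comp, hgR, hgQ]
  · rw [AffineMap.comp_apply, AffineMap.comp_apply, hgf' _ (hfspan x hx), hgf x hx]
  · rw [AffineMap.comp_apply, AffineMap.comp_apply, hfg _ (hgspan z hz), hfg' z hz]
  · exact hf' _ (hfspan x hx) (hf x hx hlat)
  · exact hg _ (hgspan z hz) (hg' z hz hlat)

theorem latticeIso_image (σ : (Fin d → ℝ) ≃ₗ[ℝ] (Fin e → ℝ))
    (hσ : ∀ x, IsLatticePt (σ x) ↔ IsLatticePt x) (P : Set (Fin d → ℝ)) :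
    LatticeIso P (σ '' P) := by
  refine ⟨σ.toLinearMap.toAffineMap, σ.symm.toLinearMap.toAffineMap, rfl, ?_,
    fun x _ => σ.symm_apply_apply x, fun y _ => σ.apply_symm_apply y, fun x _ => (hσ x).2,
    fun y _ hy => (hσ _).1 ?_⟩
  · exact Set.LeftInvOn.image_image fun x _ => σ.symm_apply_apply x
  · simpa using hy

theorem LatticeIso.polyDim_eq (h : LatticeIso P Q) : polyDim P = polyDim Q := by
  obtain ⟨f, g, rfl, -, hgf, -⟩ := h
  exact (polyDim_image_of_leftInvOn fun x hx => hgf x (subset_affineSpan ℝ P hx)).symm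

theorem LatticeIso.isLatticePolytope (h : LatticeIso P Q) (hP : IsLatticePolytope P) :
    IsLatticePolytope Q := by
  classical
  obtain ⟨f, -, rfl, -, -, -, hf, -⟩ := h
  obtain ⟨V, hV, hlat, rfl⟩ := hP
  refine ⟨V.image f, hV.image f, ?_, by rw [AffineMap.image_convexHull, Finset.coe_image]⟩
  simp only [Finset.forall_mem_image]
  exact fun v hv => hf v (subset_affineSpan ℝ _ (subset_convexHull ℝ _ hv)) (hlat v hv)

theorem IsReflexiveAt.exists_of_latticeIso {x : Fin d → ℝ} (hx : IsReflexiveAt P x)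
    (hP : Convex ℝ P) (h : LatticeIso P Q) : ∃ y, IsReflexiveAt Q y := by
  obtain ⟨f, g, hfP, hgQ, hgf, hfg, hf, hg⟩ := h
  have hxP : x ∈ affineSpan ℝ P :=
    subset_affineSpan ℝ P (intrinsicInterior_subset hx.mem_intrinsicInterior)
  refine ⟨f x, hfP ▸ map_mem_intrinsicInterior_image f hP hx.mem_intrinsicInterior,
    hf x hxP hx.isLatticePt, fun ψ hψ => ?_⟩
  have hfacet := hψ.image_of_leftInvOn fun y hy => hfg y (subset_affineSpan ℝ Q hy)
  obtain ⟨u, hu, hux⟩ := hx.exists_isIntegralOn _ (hgQ ▸ hfacet)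
  refine ⟨u.comp g, fun y hy hlat => ?_, fun y hy => ?_⟩
  · exact hu _ (hgQ ▸ apply_mem_affineSpan_image g hy) (hg y hy hlat)
  · rw [AffineMap.comp_apply, AffineMap.comp_apply, hgf x hxP]
    exact hux _ (Set.mem_image_of_mem g hy)

/-- With a lattice point `p` of `P`, a lattice point `m • x` of the dilate is moved into the affine
hull of `P` as `m • x + (1 - m) • p`. -/
theorem isLatticePt_dilateMap (hf : ∀ x ∈ affineSpan ℝ P, IsLatticePt x → IsLatticePt (f x))
    {p : Fin d → ℝ} (hp : p ∈ affineSpan ℝ P) (hlat : IsLatticePt p) (m : ℕ) {z : Fin d → ℝ}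
    (hz : z ∈ affineSpan ℝ ((m : ℝ) • P)) (hzlat : IsLatticePt z) :
    IsLatticePt (dilateMap f m z) := by
  obtain ⟨x, hx, rfl⟩ := exists_mem_affineSpan_smul_eq hz
  set w := (m : ℝ) • (x -ᵥ p) +ᵥ p with hw_def
  have hw : w ∈ affineSpan ℝ P := AffineSubspace.smul_vsub_vadd_mem _ _ hx hp hp
  have hwlat : IsLatticePt w := by
    have : w = (m : ℝ) • x - (m : ℝ) • p + p := by
      rw [hw_def, vadd_eq_add, vsub_eq_sub, smul_sub]
    rw [this]
    exact (latticePoints d).add_mem ((latticePoints d).sub_mem hzlat (hlat.natCast_smul m)) hlat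
  have hfx : dilateMap f m ((m : ℝ) • x) = f w - f p + (m : ℝ) • f p := by
    have hfw : f w = (m : ℝ) • (f x - f p) + f p := by
      rw [hw_def, AffineMap.map_vadd, map_smul, AffineMap.linearMap_vsub]
      rfl
    rw [dilateMap_smul, hfw]
    module
  rw [hfx]
  exact (latticePoints e).add_mem ((latticePoints e).sub_mem (hf w hw hwlat) (hf p hp hlat))
    ((hf p hp hlat).natCast_smul m)

theorem LatticeIso.natCast_smul (h : LatticeIso P Q) {p : Fin d → ℝ} (hp : p ∈ P)
    (hlat : IsLatticePt p) (m : ℕ) : LatticeIso ((m : ℝ) • P) ((m : ℝ) • Q) := by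
  obtain ⟨f, g, hfP, hgQ, hgf, hfg, hf, hg⟩ := h
  have hpP : p ∈ affineSpan ℝ P := subset_affineSpan ℝ P hp
  have hpQ : f p ∈ affineSpan ℝ Q := hfP ▸ apply_mem_affineSpan_image f hpP
  refine ⟨dilateMap f m, dilateMap g m, by rw [dilateMap_image_smul, hfP],
    by rw [dilateMap_image_smul, hgQ], fun x hx => ?_, fun y hy => ?_,
    fun x => isLatticePt_dilateMap hf hpP hlat m,
    fun y => isLatticePt_dilateMap hg hpQ (hf p hpP hlat) m⟩
  · obtain ⟨x, hxP, rfl⟩ := exists_mem_affineSpan_smul_eq hx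
    rw [dilateMap_smul, dilateMap_smul, hgf x hxP]
  · obtain ⟨y, hyQ, rfl⟩ := exists_mem_affineSpan_smul_eq hy
    rw [dilateMap_smul, dilateMap_smul, hfg y hyQ]

theorem LatticeIso.isIDP (h : LatticeIso P Q) {p : Fin d → ℝ} (hp : p ∈ P)
    (hlat : IsLatticePt p) (hP : IsIDP P) : IsIDP Q := by
  obtain ⟨f, g, hfP, hgQ, -, hfg, hf, hg⟩ := h
  have hpP : p ∈ affineSpan ℝ P := subset_affineSpan ℝ P hp
  have hpQ : f p ∈ affineSpan ℝ Q := hfP ▸ apply_mem_affineSpan_image f hpP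
  intro m hm y hylat hy
  have hgy : dilateMap g m y ∈ (m : ℝ) • P := by
    rw [← hgQ, ← dilateMap_image_smul]
    exact Set.mem_image_of_mem _ hy
  have hgylat : IsLatticePt (dilateMap g m y) :=
    isLatticePt_dilateMap hg hpQ (hf p hpP hlat) m (subset_affineSpan ℝ _ hy) hylat
  obtain ⟨q, hq, hsum⟩ := hP m hm _ hgylat hgy
  refine ⟨fun i => f (q i), fun i => ⟨hfP ▸ Set.mem_image_of_mem f (hq i).1,
    hf _ (subset_affineSpan ℝ P (hq i).1) (hq i).2⟩, ?_⟩
  obtain ⟨w, hw, rfl⟩ := hy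
  rw [← dilateMap_sum, ← hsum]
  simp only [dilateMap_smul, hfg w (subset_affineSpan ℝ Q hw)]

end LatticeIso

/-! ### Cayley polytopes -/

section Cayley

variable {n : ℕ} {F G φ : Set (Fin n → ℝ)}

/-- The identification of `ℝ^n × ℝ × ℝ` with the ambient space `ℝ^(n+2)` of `F * G`. -/
def cayleyEquiv (n : ℕ) : ((Fin n → ℝ) × ℝ × ℝ) ≃ₗ[ℝ] (Fin (n + 2) → ℝ) where
  toFun v := Fin.append v.1 ![v.2.1, v.2.2]
  invFun z := (fun i => z (Fin.castAdd 2 i), z (Fin.natAdd n 0), z (Fin.natAdd n 1))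
  map_add' v w := by
    rw [funext_iff, Fin.forall_fin_add, Fin.forall_fin_two]
    simp
  map_smul' c v := by
    rw [funext_iff, Fin.forall_fin_add, Fin.forall_fin_two]
    simp
  left_inv v := by simp
  right_inv z := by
    rw [funext_iff, Fin.forall_fin_add, Fin.forall_fin_two]
    simp

theorem isLatticePt_cayleyEquiv_iff {v : (Fin n → ℝ) × ℝ × ℝ} :
    IsLatticePt (cayleyEquiv n v) ↔
      IsLatticePt v.1 ∧ (∃ k : ℤ, v.2.1 = k) ∧ ∃ k : ℤ, v.2.2 = k := by
  simp [IsLatticePt, cayleyEquiv, Fin.forall_fin_add]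

/-- The embedding `x ↦ (x, s, t)` of `ℝ^n` at height `(s, t)`. -/
def cayleyIncl (n : ℕ) (s t : ℝ) : (Fin n → ℝ) →ᵃ[ℝ] (Fin (n + 2) → ℝ) :=
  (cayleyEquiv n).toLinearMap.toAffineMap.comp
    ((AffineMap.id ℝ _).prod (AffineMap.const ℝ _ (s, t)))

theorem cayleyIncl_apply (s t : ℝ) (x : Fin n → ℝ) :
    cayleyIncl n s t x = cayleyEquiv n (x, s, t) := rfl

theorem cayleyIncl_linear (s t : ℝ) :
    (cayleyIncl n s t).linear = (cayleyEquiv n).toLinearMap ∘ₗ LinearMap.inl ℝ _ _ := rfl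

theorem isLatticePt_cayleyIncl {x : Fin n → ℝ} (hx : IsLatticePt x) (k l : ℕ) :
    IsLatticePt (cayleyIncl n k l x) :=
  isLatticePt_cayleyEquiv_iff.2 ⟨hx, ⟨k, (Int.cast_natCast k).symm⟩, l, (Int.cast_natCast l).symm⟩

theorem cayleyTwo_eq_convexHull (F G : Set (Fin n → ℝ)) :
    cayleyTwo F G = convexHull ℝ (cayleyIncl n 1 0 '' F ∪ cayleyIncl n 0 1 '' G) := rfl

theorem cayleyIncl_left_mem_cayleyTwo {x : Fin n → ℝ} (hx : x ∈ F) (G : Set (Fin n → ℝ)) :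
    cayleyIncl n 1 0 x ∈ cayleyTwo F G :=
  subset_convexHull ℝ _ (.inl (Set.mem_image_of_mem _ hx))

theorem cayleyIncl_right_mem_cayleyTwo {y : Fin n → ℝ} (F : Set (Fin n → ℝ)) (hy : y ∈ G) :
    cayleyIncl n 0 1 y ∈ cayleyTwo F G :=
  subset_convexHull ℝ _ (.inr (Set.mem_image_of_mem _ hy))

theorem exists_eq_of_mem_cayleyTwo (hF : Convex ℝ F) (hG : Convex ℝ G) (hFne : F.Nonempty)
    (hGne : G.Nonempty) {z : Fin (n + 2) → ℝ} (hz : z ∈ cayleyTwo F G) :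
    ∃ x ∈ F, ∃ y ∈ G, ∃ s t : ℝ, 0 ≤ s ∧ 0 ≤ t ∧ s + t = 1 ∧
      z = s • cayleyIncl n 1 0 x + t • cayleyIncl n 0 1 y := by
  rw [cayleyTwo_eq_convexHull, convexHull_union (hFne.image _) (hGne.image _),
    (hF.affine_image _).convexHull_eq, (hG.affine_image _).convexHull_eq, mem_convexJoin] at hz
  obtain ⟨_, ⟨x, hx, rfl⟩, _, ⟨y, hy, rfl⟩, s, t, hs, ht, hst, rfl⟩ := hz
  exact ⟨x, hx, y, hy, s, t, hs, ht, hst, rfl⟩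

theorem smul_cayleyIncl_add_smul_cayleyIncl (a b : ℝ) (x y : Fin n → ℝ) :
    a • cayleyIncl n 1 0 x + b • cayleyIncl n 0 1 y = cayleyIncl n a b (a • x + b • y) := by
  simp only [cayleyIncl_apply, ← map_smul, ← map_add]
  simp

theorem cayleyIncl_add_mem_smul_cayleyTwo {a b : ℝ} (ha : 0 ≤ a) (hb : 0 ≤ b) {x y : Fin n → ℝ}
    (hx : x ∈ a • F) (hy : y ∈ b • G) :
    cayleyIncl n a b (x + y) ∈ (a + b) • cayleyTwo F G := by
  obtain ⟨x, hx, rfl⟩ := hx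
  obtain ⟨y, hy, rfl⟩ := hy
  simp only [← smul_cayleyIncl_add_smul_cayleyIncl]
  have hconv : Convex ℝ (cayleyTwo F G) := convex_convexHull ℝ _
  rw [hconv.add_smul ha hb]
  exact Set.add_mem_add (Set.smul_mem_smul_set (cayleyIncl_left_mem_cayleyTwo hx G))
    (Set.smul_mem_smul_set (cayleyIncl_right_mem_cayleyTwo F hy))

theorem cayleyTwo_nontrivial (hF : F.Nonempty) (hG : G.Nonempty) :
    (cayleyTwo F G).Nontrivial := by
  obtain ⟨x, hx⟩ := hF
  obtain ⟨y, hy⟩ := hG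
  refine ⟨_, cayleyIncl_left_mem_cayleyTwo hx G, _, cayleyIncl_right_mem_cayleyTwo F hy, ?_⟩
  simp [cayleyIncl_apply]

theorem latticeIso_cayleyTwo_swap (F G : Set (Fin n → ℝ)) :
    LatticeIso (cayleyTwo F G) (cayleyTwo G F) := by
  let σ := (cayleyEquiv n).symm ≪≫ₗ
    ((LinearEquiv.refl ℝ (Fin n → ℝ)).prodCongr (LinearEquiv.prodComm ℝ ℝ ℝ)) ≪≫ₗ cayleyEquiv n
  have hσ (v) : σ (cayleyEquiv n v) = cayleyEquiv n (v.1, v.2.2, v.2.1) := by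
    simp [σ, Prod.swap]
  have himage : σ '' cayleyTwo F G = cayleyTwo G F := by
    rw [cayleyTwo_eq_convexHull, cayleyTwo_eq_convexHull, ← LinearEquiv.coe_coe,
      LinearMap.image_convexHull, Set.image_union, Set.image_image, Set.image_image, Set.union_comm]
    simp only [cayleyIncl_apply, LinearEquiv.coe_coe, hσ]
    rfl
  rw [← himage]
  refine latticeIso_image σ (fun z => ?_) _
  obtain ⟨v, rfl⟩ := (cayleyEquiv n).surjective z
  rw [hσ, isLatticePt_cayleyEquiv_iff, isLatticePt_cayleyEquiv_iff, and_comm (a := ∃ k : ℤ, _)]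

/-- The lattice points of `F * G` at height `(1, 0)` are those of `F`, and the heights `(s, t)` of
the summands of a lattice point of `k • F` add up to `(k, 0)`. -/
theorem IsIDP.of_cayleyTwo (h : IsIDP (cayleyTwo F G)) (hF : Convex ℝ F) (hG : Convex ℝ G)
    (hGne : G.Nonempty) : IsIDP F := by
  rintro k hk _ hlat ⟨x, hx, rfl⟩
  have hmem : (k : ℝ) • cayleyIncl n 1 0 x ∈ (k : ℝ) • cayleyTwo F G :=
    Set.smul_mem_smul_set (cayleyIncl_left_mem_cayleyTwo hx G)
  have heq : (k : ℝ) • cayleyIncl n 1 0 x = cayleyEquiv n ((k : ℝ) • x, k, 0) := by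
    rw [cayleyIncl_apply, ← map_smul]
    simp
  rw [heq] at hmem
  obtain ⟨p, hp, hsum⟩ := h k hk _
    (isLatticePt_cayleyEquiv_iff.2 ⟨hlat, ⟨k, by simp⟩, 0, by simp⟩) hmem
  set q := fun i => (cayleyEquiv n).symm (p i)
  have hpq (i) : p i = cayleyEquiv n (q i) := ((cayleyEquiv n).apply_symm_apply _).symm
  simp only [hpq, ← map_sum, (cayleyEquiv n).injective.eq_iff] at hsum
  have hq : ∀ i, 0 ≤ (q i).2.2 ∧ ((q i).2.2 = 0 → (q i).1 ∈ F) := by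
    intro i
    obtain ⟨x, hx, y, -, s, t, -, ht, hst, hz⟩ :=
      exists_eq_of_mem_cayleyTwo hF hG ⟨x, hx⟩ hGne (hp i).1
    rw [hpq, smul_cayleyIncl_add_smul_cayleyIncl, cayleyIncl_apply,
      (cayleyEquiv n).injective.eq_iff] at hz
    rw [hz]
    refine ⟨ht, fun ht0 => ?_⟩
    obtain rfl : t = 0 := ht0
    obtain rfl : s = 1 := by rwa [add_zero] at hst
    simpa using hx
  have hheight : ∑ i, (q i).2.2 = 0 := by
    simpa [Prod.snd_sum] using (congrArg (·.2.2) hsum).symm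
  have hzero (i) : (q i).2.2 = 0 :=
    (Finset.sum_eq_zero_iff_of_nonneg fun i _ => (hq i).1).1 hheight i (Finset.mem_univ i)
  refine ⟨fun i => (q i).1, fun i => ⟨(hq i).2 (hzero i), ?_⟩, ?_⟩
  · exact (isLatticePt_cayleyEquiv_iff.1 (hpq i ▸ (hp i).2)).1
  · simpa [Prod.fst_sum] using congrArg Prod.fst hsum

theorem polyDim_cayleyTwo (hF : F.Nonempty) (hG : G.Nonempty) :
    polyDim (cayleyTwo F G) =
      Module.finrank ℝ (vectorSpan ℝ F ⊔ vectorSpan ℝ G : Submodule ℝ (Fin n → ℝ)) + 1 := by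
  obtain ⟨x, hx⟩ := hF
  obtain ⟨y, hy⟩ := hG
  set W := vectorSpan ℝ F ⊔ vectorSpan ℝ G
  set v := cayleyIncl n 0 1 y -ᵥ cayleyIncl n 1 0 x
  let j := (cayleyEquiv n).toLinearMap ∘ₗ LinearMap.inl ℝ (Fin n → ℝ) (ℝ × ℝ)
  have hj : Function.Injective j := (cayleyEquiv n).injective.comp LinearMap.inl_injective
  have hv : v ∉ W.map j := by
    rintro ⟨w, -, hw⟩
    have : (w, (0, 0)) = (y, ((0 : ℝ), (1 : ℝ))) - (x, (1, 0)) :=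
      (cayleyEquiv n).injective (hw.trans (map_sub (cayleyEquiv n) _ _).symm)
    simp at this
  have hdir : (affineSpan ℝ (cayleyTwo F G)).direction = W.map j ⊔ Submodule.span ℝ {v} := by
    rw [cayleyTwo_eq_convexHull, affineSpan_convexHull, AffineSubspace.span_union,
      AffineSubspace.direction_sup (subset_affineSpan ℝ _ (Set.mem_image_of_mem _ hx))
        (subset_affineSpan ℝ _ (Set.mem_image_of_mem _ hy)), direction_affineSpan,
      direction_affineSpan, ← AffineMap.map_vectorSpan, ← AffineMap.map_vectorSpan,
      cayleyIncl_linear, cayleyIncl_linear, ← Submodule.map_sup]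
  rw [polyDim, hdir, Submodule.finrank_sup_span_singleton hv,
    ← (Submodule.equivMapOfInjective j hj W).finrank_eq]

theorem polyDim_cayleyTwo_eq_iff_disjoint (hF : F.Nonempty) (hG : G.Nonempty) :
    polyDim (cayleyTwo F G) = polyDim F + polyDim G + 1 ↔
      Disjoint (vectorSpan ℝ F) (vectorSpan ℝ G) := by
  have hsup := Submodule.finrank_sup_add_finrank_inf_eq (vectorSpan ℝ F) (vectorSpan ℝ G)
  rw [polyDim_cayleyTwo hF hG, polyDim_eq_finrank_vectorSpan, polyDim_eq_finrank_vectorSpan,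
    disjoint_iff, ← Submodule.finrank_eq_zero (R := ℝ)]
  omega

theorem exists_dual_cayleyTwo (h : Disjoint (vectorSpan ℝ F) (vectorSpan ℝ G))
    (l : Module.Dual ℝ (Fin n → ℝ)) {p q : Fin n → ℝ} (hp : p ∈ F) (hq : q ∈ G) :
    ∃ H : Module.Dual ℝ (Fin (n + 2) → ℝ),
      (∀ x ∈ F, H (cayleyIncl n 1 0 x) = l x - l p) ∧ ∀ y ∈ G, H (cayleyIncl n 0 1 y) = 0 := by
  obtain ⟨W, hFW, hW⟩ := h.exists_isCompl
  let m : Module.Dual ℝ (Fin n → ℝ) := LinearMap.ofIsCompl hW (l.domRestrict W) 0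
  have hmF : ∀ x ∈ F, m x - m p = l x - l p := fun x hx => by
    rw [← map_sub, ← map_sub]
    exact LinearMap.ofIsCompl_apply_left hW ⟨x - p, hFW (vsub_mem_vectorSpan ℝ hx hp)⟩
  have hmG : ∀ y ∈ G, m y - m q = 0 := fun y hy => by
    rw [← map_sub]
    exact LinearMap.ofIsCompl_apply_right hW ⟨y - q, vsub_mem_vectorSpan ℝ hy hq⟩
  let H := (m.coprod (LinearMap.coprod ((-m p) • LinearMap.id) ((-m q) • LinearMap.id))) ∘ₗ
    (cayleyEquiv n).symm.toLinearMap
  refine ⟨H, fun x hx => ?_, fun y hy => ?_⟩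
  · simpa [H, cayleyIncl_apply, sub_eq_add_neg] using hmF x hx
  · simpa [H, cayleyIncl_apply, sub_eq_add_neg] using hmG y hy

theorem isExposed_cayleyTwo (hφ : IsExposed ℝ F φ) (hφne : φ.Nonempty) (hF : Convex ℝ F)
    (hG : Convex ℝ G) (hGne : G.Nonempty) (h : Disjoint (vectorSpan ℝ F) (vectorSpan ℝ G)) :
    IsExposed ℝ (cayleyTwo F G) (cayleyTwo φ G) := by
  obtain ⟨l, hl⟩ := hφ hφne
  obtain ⟨p, hp⟩ := hφne
  obtain ⟨q, hq⟩ := hGne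
  have hpl : p ∈ F ∧ ∀ x ∈ F, l x ≤ l p := by rwa [hl] at hp
  obtain ⟨H, hHF, hHG⟩ := exists_dual_cayleyTwo h (l : Module.Dual ℝ (Fin n → ℝ)) hpl.1 hq
  have hH0 : ∀ x ∈ φ, H (cayleyIncl n 1 0 x) = 0 := fun x hx => by
    have hxl : x ∈ F ∧ ∀ y ∈ F, l y ≤ l x := by rwa [hl] at hx
    rw [hHF x hxl.1, sub_eq_zero]
    exact (hpl.2 x hxl.1).antisymm (hxl.2 p hpl.1)
  have hle : ∀ z ∈ cayleyTwo F G, H z ≤ 0 := fun z hz => by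
    refine convexHull_min ?_ (convex_halfSpace_le H.isLinear 0) hz
    rintro _ (⟨x, hx, rfl⟩ | ⟨y, hy, rfl⟩)
    · exact (hHF x hx).trans_le (sub_nonpos.2 (hpl.2 x hx))
    · exact (hHG y hy).le
  have hface : cayleyTwo φ G = {z ∈ cayleyTwo F G | H.toAffineMap z = 0} := by
    refine Set.Subset.antisymm (fun z hz => ⟨?_, ?_⟩) fun z hz => ?_
    · exact convexHull_mono (Set.union_subset_union_left _ (Set.image_mono hφ.subset)) hz
    · refine convexHull_min ?_ (convex_hyperplane H.isLinear 0) hz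
      rintro _ (⟨x, hx, rfl⟩ | ⟨y, hy, rfl⟩)
      · exact hH0 x hx
      · exact hHG y hy
    · obtain ⟨hz, hHz⟩ := hz
      obtain ⟨x, hx, y, hy, s, t, hs, ht, hst, rfl⟩ :=
        exists_eq_of_mem_cayleyTwo hF hG ⟨p, hpl.1⟩ ⟨q, hq⟩ hz
      have hsl : s * (l x - l p) = 0 := by
        simpa [hHF x hx, hHG y hy] using hHz
      have hy' := cayleyIncl_right_mem_cayleyTwo φ hy
      rcases mul_eq_zero.1 hsl with rfl | hxp
      · simpa [show t = 1 by linarith] using hy'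
      · have hxφ : x ∈ φ := hl ▸ ⟨hx, fun w hw => sub_eq_zero.1 hxp ▸ hpl.2 w hw⟩
        exact convex_convexHull ℝ _ (cayleyIncl_left_mem_cayleyTwo hxφ G) hy' hs ht hst
  rw [hface]
  exact isExposed_sep_eq hle

theorem isFacet_cayleyTwo (hφ : IsFacet F φ) (hF : Convex ℝ F) (hG : Convex ℝ G)
    (hGne : G.Nonempty) (h : Disjoint (vectorSpan ℝ F) (vectorSpan ℝ G)) :
    IsFacet (cayleyTwo F G) (cayleyTwo φ G) := by
  obtain ⟨hexp, hne, hdim⟩ := hφ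
  refine ⟨isExposed_cayleyTwo hexp hne hF hG hGne h, (cayleyTwo_nontrivial hne hGne).nonempty, ?_⟩
  rw [(polyDim_cayleyTwo_eq_iff_disjoint (hne.mono hexp.subset) hGne).2 h,
    (polyDim_cayleyTwo_eq_iff_disjoint hne hGne).2 (h.mono_left (vectorSpan_mono ℝ hexp.subset)),
    ← hdim]
  ring

theorem IsReflexiveAt.of_cayleyTwo {a b : ℕ} (ha : 0 < a) (hF : Convex ℝ F) (hG : Convex ℝ G)
    (h : Disjoint (vectorSpan ℝ F) (vectorSpan ℝ G)) {x y : Fin n → ℝ}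
    (hx : x ∈ intrinsicInterior ℝ ((a : ℝ) • F)) (hxlat : IsLatticePt x) (hy : y ∈ (b : ℝ) • G)
    (hylat : IsLatticePt y)
    (hxy : IsReflexiveAt (((a + b : ℕ) : ℝ) • cayleyTwo F G) (cayleyIncl n a b (x + y))) :
    IsReflexiveAt ((a : ℝ) • F) x := by
  have ha' : (a : ℝ) ≠ 0 := by positivity
  have hab : ((a + b : ℕ) : ℝ) ≠ 0 := by positivity
  refine ⟨hx, hxlat, fun φ hφ => ?_⟩
  have hsmul : (a : ℝ) • (a : ℝ)⁻¹ • φ = φ := smul_inv_smul₀ ha' φ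
  have hfacet : IsFacet F ((a : ℝ)⁻¹ • φ) := by
    simpa only [inv_smul_smul₀ ha'] using hφ.smul (inv_ne_zero ha')
  obtain ⟨u, hu, hux⟩ := hxy.exists_isIntegralOn _
    ((isFacet_cayleyTwo hfacet hF hG (Set.smul_set_nonempty.1 ⟨y, hy⟩) h).smul hab)
  let τ : (Fin n → ℝ) →ᵃ[ℝ] (Fin (n + 2) → ℝ) :=
    (cayleyIncl n a b).comp (AffineMap.id ℝ _ + AffineMap.const ℝ _ y)
  have hτ : ∀ {A : Set (Fin n → ℝ)}, ∀ w ∈ (a : ℝ) • A, τ w ∈ ((a + b : ℕ) : ℝ) • cayleyTwo A G :=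
    fun w hw => by
      rw [Nat.cast_add]
      exact cayleyIncl_add_mem_smul_cayleyTwo a.cast_nonneg b.cast_nonneg hw hy
  refine ⟨u.comp τ, fun w hw hwlat => hu (τ w) ?_ ?_, fun w hw => hux (τ w) ?_⟩
  · exact affineSpan_mono ℝ (Set.image_subset_iff.2 hτ) (apply_mem_affineSpan_image τ hw)
  · exact isLatticePt_cayleyIncl ((latticePoints n).add_mem hwlat hylat) a b
  · exact hτ w (hsmul.symm ▸ hw)

theorem cayleyIncl_add_mem_intrinsicInterior (hF : Convex ℝ F) (hG : Convex ℝ G)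
    {p q : Fin n → ℝ} (hp : p ∈ intrinsicInterior ℝ F) (hq : q ∈ intrinsicInterior ℝ G) {s t : ℝ}
    (hs : 0 < s) (ht : 0 < t) (hst : s + t = 1) :
    cayleyIncl n s t (s • p + t • q) ∈ intrinsicInterior ℝ (cayleyTwo F G) := by
  rw [← smul_cayleyIncl_add_smul_cayleyIncl, cayleyTwo_eq_convexHull]
  exact smul_add_smul_mem_intrinsicInterior_convexHull_union (hF.affine_image _)
    (hG.affine_image _) (map_mem_intrinsicInterior_image _ hF hp)
    (map_mem_intrinsicInterior_image _ hG hq) hs ht hst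

end Cayley

/-! ### Factors of reducible Gorenstein polytopes -/

section Factors

variable {d n : ℕ} {P : Set (Fin d → ℝ)} {F G : Set (Fin n → ℝ)}

theorem IsReflexiveAt.eq_cayleyIncl {a b r : ℕ} (ha : 0 < a) (hb : 0 < b) (hab : a + b ≤ r)
    (hFG : IsLatticePolytope (cayleyTwo F G)) (hF : Convex ℝ F) (hG : Convex ℝ G)
    {p q : Fin n → ℝ} (hp : p ∈ intrinsicInterior ℝ F) (hplat : IsLatticePt ((a : ℝ) • p))
    (hq : q ∈ intrinsicInterior ℝ G) (hqlat : IsLatticePt ((b : ℝ) • q)) {z : Fin (n + 2) → ℝ}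
    (hz : IsReflexiveAt ((r : ℝ) • cayleyTwo F G) z) :
    r = a + b ∧ z = cayleyIncl n a b ((a : ℝ) • p + (b : ℝ) • q) := by
  have hab0 : (a + b : ℝ) ≠ 0 := by positivity
  set s : ℝ := a / (a + b) with hs
  set t : ℝ := b / (a + b) with ht
  have hint : cayleyIncl n s t (s • p + t • q) ∈ intrinsicInterior ℝ (cayleyTwo F G) :=
    cayleyIncl_add_mem_intrinsicInterior hF hG hp hq (by positivity) (by positivity)
      (by rw [hs, ht, ← add_div, div_self hab0])
  have hsmul : ((a + b : ℕ) : ℝ) • cayleyIncl n s t (s • p + t • q) =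
      cayleyIncl n a b ((a : ℝ) • p + (b : ℝ) • q) := by
    rw [← smul_cayleyIncl_add_smul_cayleyIncl, ← smul_cayleyIncl_add_smul_cayleyIncl, smul_add,
      smul_smul, smul_smul, Nat.cast_add, hs, ht, mul_div_cancel₀ _ hab0, mul_div_cancel₀ _ hab0]
  have hlat : IsLatticePt (((a + b : ℕ) : ℝ) • cayleyIncl n s t (s • p + t • q)) :=
    hsmul ▸ isLatticePt_cayleyIncl ((latticePoints n).add_mem hplat hqlat) a b
  obtain ⟨rfl, rfl⟩ := hz.eq_of_isLatticePt_smul (by positivity) hab hFG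
    (cayleyTwo_nontrivial ⟨p, intrinsicInterior_subset hp⟩ ⟨q, intrinsicInterior_subset hq⟩)
    hint hlat
  exact ⟨rfl, hsmul⟩

theorem IsReflexiveAt.isGorenstein_left_of_cayleyTwo {r : ℕ} {z : Fin (n + 2) → ℝ}
    (hz : IsReflexiveAt ((r : ℝ) • cayleyTwo F G) z) (hr : polyCodeg F + polyCodeg G ≤ r)
    (hFG : IsLatticePolytope (cayleyTwo F G)) (hF : IsLatticePolytope F)
    (hG : IsLatticePolytope G) (h : Disjoint (vectorSpan ℝ F) (vectorSpan ℝ G)) :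
    IsGorenstein F := by
  obtain ⟨ha, p, hp, hplat⟩ := hF.polyCodeg_spec
  obtain ⟨hb, q, hq, hqlat⟩ := hG.polyCodeg_spec
  obtain ⟨rfl, rfl⟩ := hz.eq_cayleyIncl ha hb hr hFG hF.convex hG.convex hp hplat hq hqlat
  exact ⟨polyCodeg F, ha, isReflexivePolytope_iff_exists_isReflexiveAt.2 ⟨_,
    hz.of_cayleyTwo ha hF.convex hG.convex h
      (smul_mem_intrinsicInterior_smul hF.convex hp _) hplat
      (Set.smul_mem_smul_set (intrinsicInterior_subset hq)) hqlat⟩⟩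

theorem IsReducibleWith.symm (h : IsReducibleWith P F G) : IsReducibleWith P G F := by
  obtain ⟨⟨hiso, hdim⟩, hcodeg⟩ := h
  exact ⟨⟨hiso.trans (latticeIso_cayleyTwo_swap F G), add_comm (polyDim F) _ ▸ hdim⟩,
    add_comm (polyCodeg F) _ ▸ hcodeg⟩

theorem IsReducibleWith.isIDP_left (h : IsReducibleWith P F G) (hP : IsLatticePolytope P)
    (hF : IsLatticePolytope F) (hG : IsLatticePolytope G) (hIDP : IsIDP P) : IsIDP F := by
  obtain ⟨p, hp, hplat⟩ := hP.exists_isLatticePt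
  obtain ⟨q, hq, -⟩ := hG.exists_isLatticePt
  exact (h.1.1.isIDP hp hplat hIDP).of_cayleyTwo hF.convex hG.convex ⟨q, hq⟩

theorem IsReducibleWith.isGorenstein_left (h : IsReducibleWith P F G) (hP : IsLatticePolytope P)
    (hF : IsLatticePolytope F) (hG : IsLatticePolytope G) (hGor : IsGorenstein P) :
    IsGorenstein F := by
  obtain ⟨⟨hiso, hdim⟩, hcodeg⟩ := h
  obtain ⟨v, hv, hvlat⟩ := hP.exists_isLatticePt
  obtain ⟨x, hx, -⟩ := hF.exists_isLatticePt
  obtain ⟨y, hy, -⟩ := hG.exists_isLatticePt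
  obtain ⟨r, hr, hrefl⟩ := hGor
  obtain ⟨w, hw⟩ := isReflexivePolytope_iff_exists_isReflexiveAt.1 hrefl
  obtain ⟨z, hz⟩ := hw.exists_of_latticeIso (hP.convex.smul _) (hiso.natCast_smul hv hvlat r)
  have hle : polyCodeg F + polyCodeg G ≤ r :=
    hcodeg.trans_le (Nat.sInf_le ⟨hr, fun h => h w hw.mem_intrinsicInterior hw.isLatticePt⟩)
  have hdisj : Disjoint (vectorSpan ℝ F) (vectorSpan ℝ G) :=
    (polyDim_cayleyTwo_eq_iff_disjoint ⟨x, hx⟩ ⟨y, hy⟩).1 (hiso.polyDim_eq.symm.trans hdim.symm)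
  exact hz.isGorenstein_left_of_cayleyTwo hle (hiso.isLatticePolytope hP) hF hG hdisj

end Factors

/-- If a Gorenstein polytope `P` is reducible with factors `F` and `G` and `P` is IDP,
then `F` and `G` are IDP Gorenstein polytopes. -/
theorem stmt17 {N n : ℕ} (P : Set (Fin N → ℝ)) (F G : Set (Fin n → ℝ))
    (hP : IsLatticePolytope P) (hF : IsLatticePolytope F) (hG : IsLatticePolytope G)
    (hGor : IsGorenstein P) (hred : IsReducibleWith P F G) (hIDP : IsIDP P) :
    IsIDP F ∧ IsIDP G ∧ IsGorenstein F ∧ IsGorenstein G :=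
  ⟨hred.isIDP_left hP hF hG hIDP, hred.symm.isIDP_left hP hG hF hIDP,
    hred.isGorenstein_left hP hF hG hGor, hred.symm.isGorenstein_left hP hG hF hGor⟩
end

section
/- The free join of two Gorenstein polytopes of degrees s_1 and s_2 is a Gorenstein polytope of degree s_1 + s_2. -/
open Pointwise

/-
Place a polytope `P` at height one and let `C` be the cone over it. The lattice points in the
relative interior of `r • P` are the interior lattice points of `C` of height `r`, and the facets
of `r • P` are the slices of the facets of `C`. Hence `P` is Gorenstein exactly when `C` has an
interior lattice point at lattice distance one from every facet, and the codegree of `P` is the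
smallest height of an interior lattice point. The cone over a free join is, lattice included, the
direct sum of the two cones. A facet of a direct sum is a facet of one summand plus the other
summand, so the two distinguished points add up to one for the free join. Interior lattice points
of the direct sum are pairs of such points with heights adding up, so codegrees are additive; since
`dim + 1 = dim C` is additive too, so are degrees.
-/

open Module Submodule

section Cone

variable {M N ι κ : Type*} [AddCommGroup M] [Module ℝ M] [AddCommGroup N] [Module ℝ N]
  [Fintype ι] [Fintype κ]

/-- The relative interior of the cone generated by the finite family `g`, described as the set of
combinations of the generators with strictly positive coefficients. -/
def coneInterior (g : ι → M) : Set M :=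
  Fintype.linearCombination ℝ g '' {μ | ∀ i, 0 < μ i}

lemma mem_coneInterior {g : ι → M} {p : M} :
    p ∈ coneInterior g ↔ ∃ μ : ι → ℝ, (∀ i, 0 < μ i) ∧ ∑ i, μ i • g i = p :=
  Iff.rfl

lemma coneInterior_subset_span (g : ι → M) : coneInterior g ⊆ span ℝ (Set.range g) := by
  rintro _ ⟨μ, -, rfl⟩
  rw [← Fintype.range_linearCombination]
  exact LinearMap.mem_range_self _ μ

lemma smul_mem_coneInterior {g : ι → M} {p : M} {c : ℝ} (hc : 0 < c) (hp : p ∈ coneInterior g) :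
    c • p ∈ coneInterior g := by
  obtain ⟨μ, hμ, rfl⟩ := hp
  exact ⟨c • μ, fun i => mul_pos hc (hμ i), map_smul _ c μ⟩

lemma smul_mem_coneInterior_iff {g : ι → M} {p : M} {c : ℝ} (hc : 0 < c) :
    c • p ∈ coneInterior g ↔ p ∈ coneInterior g :=
  ⟨fun h => inv_smul_smul₀ hc.ne' p ▸ smul_mem_coneInterior (inv_pos.2 hc) h,
    smul_mem_coneInterior hc⟩

lemma coneInterior_linearEquiv_comp (e : M ≃ₗ[ℝ] N) (g : ι → M) :
    coneInterior (e ∘ g) = e '' coneInterior g := by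
  rw [coneInterior, coneInterior, Set.image_image]
  exact Set.image_congr fun μ _ => by simp [Fintype.linearCombination_apply]

lemma coneInterior_sumElim (g : ι → M) (h : κ → N) :
    coneInterior (Sum.elim (LinearMap.inl ℝ M N ∘ g) (LinearMap.inr ℝ M N ∘ h)) =
      coneInterior g ×ˢ coneInterior h := by
  have combination_eq (μ : ι ⊕ κ → ℝ) :
      ∑ i, μ i • Sum.elim (LinearMap.inl ℝ M N ∘ g) (LinearMap.inr ℝ M N ∘ h) i =
        (∑ i, μ (.inl i) • g i, ∑ k, μ (.inr k) • h k) := by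
    simp [Prod.ext_iff, Prod.fst_sum, Prod.snd_sum]
  ext ⟨p, q⟩
  simp only [mem_coneInterior, Set.mem_prod, combination_eq, Prod.mk.injEq, Sum.forall]
  constructor
  · rintro ⟨μ, ⟨hμ, hμ'⟩, hp, hq⟩
    exact ⟨⟨_, hμ, hp⟩, _, hμ', hq⟩
  · rintro ⟨⟨μ, hμ, hp⟩, ν, hν, hq⟩
    exact ⟨Sum.elim μ ν, ⟨hμ, hν⟩, hp, hq⟩

lemma coneInterior_comp_subset {g : ι → M} {s : κ → ι}
    (hs : ∀ i, g i ∈ span ℝ (Set.range (g ∘ s))) :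
    coneInterior (g ∘ s) ⊆ coneInterior g := by
  classical
  rintro _ ⟨ν, hν, rfl⟩
  -- Add `ε • ∑ i, g i` and subtract it again after expressing it through `g ∘ s`.
  obtain ⟨c, hc⟩ : ∃ c : κ → ℝ, ∑ k, c k • g (s k) = ∑ i, g i :=
    mem_span_range_iff_exists_fun ℝ |>.1 (sum_mem fun i _ => hs i)
  obtain ⟨ε, hε, hνε⟩ : ∃ ε > 0, ∀ k, 0 < ν k - ε * c k := by
    have near_zero : ∀ᶠ ε in nhdsWithin (0 : ℝ) (Set.Ioi 0), ∀ k, 0 < ν k - ε * c k := by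
      refine Filter.eventually_all.2 fun k => nhdsWithin_le_nhds ?_
      exact ContinuousAt.eventually_lt (by fun_prop) (by fun_prop) (by simpa using hν k)
    obtain ⟨ε, h, hε⟩ := (near_zero.and self_mem_nhdsWithin).exists
    exact ⟨ε, hε, h⟩
  refine mem_coneInterior.2 ⟨fun i => ε + ∑ k with s k = i, (ν k - ε * c k), fun i => ?_, ?_⟩
  · exact add_pos_of_pos_of_nonneg hε (Finset.sum_nonneg fun k _ => (hνε k).le)
  · calc ∑ i, (ε + ∑ k with s k = i, (ν k - ε * c k)) • g i
        = ε • ∑ i, g i + ∑ i, ∑ k with s k = i, (ν k - ε * c k) • g (s k) := by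
          simp only [add_smul, Finset.sum_add_distrib, Finset.smul_sum, Finset.sum_smul]
          congr! 3 with i _ k hk
          rw [(Finset.mem_filter.1 hk).2]
      _ = ε • ∑ i, g i + ∑ k, (ν k - ε * c k) • g (s k) := by
          congr 1
          exact Finset.sum_fiberwise _ s fun k => (ν k - ε * c k) • g (s k)
      _ = Fintype.linearCombination ℝ (g ∘ s) ν := by
          simp only [← hc, sub_smul, Finset.sum_sub_distrib, mul_smul, ← Finset.smul_sum,
            Fintype.linearCombination_apply, Function.comp_apply, add_sub_cancel]

/-- The chosen generators form a basis of the span. -/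
lemma exists_sum_mem_coneInterior (g : ι → M) :
    ∃ s : Fin (finrank ℝ (span ℝ (Set.range g))) → ι, ∑ k, g (s k) ∈ coneInterior g := by
  have := FiniteDimensional.span_of_finite ℝ (Set.finite_range g)
  obtain ⟨f, hf, hspan, -⟩ := exists_fun_fin_finrank_span_eq ℝ (Set.range g)
  choose s hs using hf
  obtain rfl : g ∘ s = f := funext hs
  have hg (i : ι) : g i ∈ span ℝ (Set.range (g ∘ s)) := by
    rw [hspan]; exact subset_span ⟨i, rfl⟩
  exact ⟨s, coneInterior_comp_subset hg (mem_coneInterior.2 ⟨1, by simp, by simp⟩)⟩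

end Cone

lemma isOpen_preimage_coneInterior {M ι : Type*} [NormedAddCommGroup M] [NormedSpace ℝ M]
    [Fintype ι] (g : ι → M) :
    IsOpen ((↑) ⁻¹' coneInterior g : Set (span ℝ (Set.range g))) := by
  rw [← Fintype.range_linearCombination]
  set T := Fintype.linearCombination ℝ g
  have image_eq : ((↑) ⁻¹' coneInterior g : Set (LinearMap.range T)) =
      T.rangeRestrict '' {μ | ∀ i, 0 < μ i} := by
    ext p
    simp [coneInterior, Subtype.ext_iff, T]
  rw [image_eq]
  refine LinearMap.isOpenMap_of_finiteDimensional _ T.surjective_rangeRestrict _ ?_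
  simp only [Set.ofPred_forall]
  exact isOpen_iInter_of_finite fun i => isOpen_lt continuous_const (continuous_apply i)

section Gorenstein

variable {M N ι κ : Type*} [AddCommGroup M] [Module ℝ M] [AddCommGroup N] [Module ℝ N]

/-- A linear functional that is nonnegative on the generators `g` and cuts out a facet of the cone
they generate, the facet being spanned by the generators on which the functional vanishes. -/
structure IsFacetFunctional (g : ι → M) (l : M →ₗ[ℝ] ℝ) : Prop where
  nonneg : ∀ i, 0 ≤ l (g i)
  finrank_add_one :
    finrank ℝ (span ℝ (g '' {i | l (g i) = 0})) + 1 = finrank ℝ (span ℝ (Set.range g))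

/-- The point `p` is an interior lattice point, for the lattice `L`, of the cone generated by `g`
that has lattice distance one from every facet. The linear functional measuring this distance needs
to be integral only on the lattice points in the span of the cone. -/
structure IsGorensteinPoint [Fintype ι] (L : AddSubgroup M) (g : ι → M) (p : M) : Prop where
  mem_lattice : p ∈ L
  mem_coneInterior : p ∈ coneInterior g
  exists_functional : ∀ l, IsFacetFunctional g l → ∃ w : M →ₗ[ℝ] ℝ,
    (∀ q ∈ span ℝ (Set.range g), q ∈ L → ∃ z : ℤ, w q = z) ∧
      (∀ i, l (g i) = 0 → w (g i) = 0) ∧ w p = 1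

lemma finrank_span_image_linearEquiv (e : M ≃ₗ[ℝ] N) (s : Set M) :
    finrank ℝ (span ℝ (e '' s)) = finrank ℝ (span ℝ s) := by
  rw [← LinearEquiv.coe_coe, ← map_span, LinearEquiv.finrank_map_eq]

lemma IsFacetFunctional.of_linearEquiv_comp {e : M ≃ₗ[ℝ] N} {g : ι → M} {l : N →ₗ[ℝ] ℝ}
    (hl : IsFacetFunctional (e ∘ g) l) : IsFacetFunctional g (l ∘ₗ e) where
  nonneg := hl.nonneg
  finrank_add_one := by
    rw [← finrank_span_image_linearEquiv e, ← finrank_span_image_linearEquiv e, ← Set.image_comp,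
      ← Set.range_comp]
    exact hl.finrank_add_one

lemma IsGorensteinPoint.map [Fintype ι] {e : M ≃ₗ[ℝ] N} {L : AddSubgroup N} {g : ι → M} {p : M}
    (hp : IsGorensteinPoint (L.comap e.toLinearMap.toAddMonoidHom) g p) :
    IsGorensteinPoint L (e ∘ g) (e p) where
  mem_lattice := hp.mem_lattice
  mem_coneInterior := by
    rw [coneInterior_linearEquiv_comp]
    exact ⟨p, hp.mem_coneInterior, rfl⟩
  exists_functional l hl := by
    obtain ⟨w, hw, hzero, hone⟩ := hp.exists_functional _ hl.of_linearEquiv_comp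
    refine ⟨w ∘ₗ e.symm, fun q hq hqL => hw (e.symm q) ?_ ?_, fun i hi => ?_, ?_⟩
    · rwa [Set.range_comp, ← LinearEquiv.coe_coe, ← map_span, mem_map_equiv] at hq
    · simpa using hqL
    · simpa using hzero i hi
    · simpa using hone

lemma finrank_submodule_prod {K V W : Type*} [DivisionRing K] [AddCommGroup V] [Module K V]
    [AddCommGroup W] [Module K W] (p : Submodule K V) (q : Submodule K W)
    [FiniteDimensional K p] [FiniteDimensional K q] :
    finrank K (p.prod q) = finrank K p + finrank K q := by
  rw [← finrank_prod, ← LinearMap.finrank_range_of_inj (f := p.subtype.prodMap q.subtype)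
    (p.injective_subtype.prodMap q.injective_subtype), LinearMap.range_prodMap, range_subtype,
    range_subtype]

lemma finrank_span_inl_union_inr {A : Set M} {B : Set N} (hA : A.Finite) (hB : B.Finite) :
    finrank ℝ (span ℝ (LinearMap.inl ℝ M N '' A ∪ LinearMap.inr ℝ M N '' B)) =
      finrank ℝ (span ℝ A) + finrank ℝ (span ℝ B) := by
  have := FiniteDimensional.span_of_finite ℝ hA
  have := FiniteDimensional.span_of_finite ℝ hB
  rw [LinearMap.span_inl_union_inr, finrank_submodule_prod]

lemma finrank_span_image_le [Finite ι] (g : ι → M) (s : Set ι) :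
    finrank ℝ (span ℝ (g '' s)) ≤ finrank ℝ (span ℝ (Set.range g)) :=
  have := FiniteDimensional.span_of_finite ℝ (Set.finite_range g)
  finrank_mono (span_mono (Set.image_subset_range g s))

lemma range_sumElim_inl_inr (g : ι → M) (h : κ → N) :
    Set.range (Sum.elim (LinearMap.inl ℝ M N ∘ g) (LinearMap.inr ℝ M N ∘ h)) =
      LinearMap.inl ℝ M N '' Set.range g ∪ LinearMap.inr ℝ M N '' Set.range h := by
  rw [Set.Sum.elim_range, Set.range_comp, Set.range_comp]

lemma IsFacetFunctional.inl_or_inr [Finite ι] [Finite κ] {g : ι → M} {h : κ → N}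
    {l : M × N →ₗ[ℝ] ℝ}
    (hl : IsFacetFunctional (Sum.elim (LinearMap.inl ℝ M N ∘ g) (LinearMap.inr ℝ M N ∘ h)) l) :
    IsFacetFunctional g (l ∘ₗ LinearMap.inl ℝ M N) ∨
      IsFacetFunctional h (l ∘ₗ LinearMap.inr ℝ M N) := by
  have zeros_eq : Sum.elim (LinearMap.inl ℝ M N ∘ g) (LinearMap.inr ℝ M N ∘ h) ''
      {i | l (Sum.elim (LinearMap.inl ℝ M N ∘ g) (LinearMap.inr ℝ M N ∘ h) i) = 0} =
      LinearMap.inl ℝ M N '' (g '' {i | l (LinearMap.inl ℝ M N (g i)) = 0}) ∪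
        LinearMap.inr ℝ M N '' (h '' {k | l (LinearMap.inr ℝ M N (h k)) = 0}) := by
    ext p
    simp
  have finrank_eq := hl.finrank_add_one
  rw [zeros_eq, range_sumElim_inl_inr, finrank_span_inl_union_inr (Set.toFinite _) (Set.toFinite _),
    finrank_span_inl_union_inr (Set.toFinite _) (Set.toFinite _)] at finrank_eq
  have hg := finrank_span_image_le g {i | l (LinearMap.inl ℝ M N (g i)) = 0}
  have hh := finrank_span_image_le h {k | l (LinearMap.inr ℝ M N (h k)) = 0}
  have one_drops : finrank ℝ (span ℝ (g '' {i | l (LinearMap.inl ℝ M N (g i)) = 0})) + 1 =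
        finrank ℝ (span ℝ (Set.range g)) ∨
      finrank ℝ (span ℝ (h '' {k | l (LinearMap.inr ℝ M N (h k)) = 0})) + 1 =
        finrank ℝ (span ℝ (Set.range h)) := by
    lia
  exact one_drops.imp (fun H => ⟨fun i => hl.nonneg (.inl i), H⟩)
    fun H => ⟨fun k => hl.nonneg (.inr k), H⟩

lemma IsGorensteinPoint.prod [Fintype ι] [Fintype κ] {L : AddSubgroup M} {L' : AddSubgroup N}
    {g : ι → M} {h : κ → N} {p : M} {q : N} (hp : IsGorensteinPoint L g p)
    (hq : IsGorensteinPoint L' h q) :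
    IsGorensteinPoint (L.prod L')
      (Sum.elim (LinearMap.inl ℝ M N ∘ g) (LinearMap.inr ℝ M N ∘ h)) (p, q) where
  mem_lattice := ⟨hp.mem_lattice, hq.mem_lattice⟩
  mem_coneInterior := by
    rw [coneInterior_sumElim]
    exact ⟨hp.mem_coneInterior, hq.mem_coneInterior⟩
  exists_functional l hl := by
    rw [range_sumElim_inl_inr, LinearMap.span_inl_union_inr]
    rcases hl.inl_or_inr with hl | hl
    · obtain ⟨w, hw, hzero, hone⟩ := hp.exists_functional _ hl
      exact ⟨w ∘ₗ LinearMap.fst ℝ M N, fun r hr hrL => hw r.1 hr.1 hrL.1,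
        Sum.rec hzero fun k _ => w.map_zero, hone⟩
    · obtain ⟨w, hw, hzero, hone⟩ := hq.exists_functional _ hl
      exact ⟨w ∘ₗ LinearMap.snd ℝ M N, fun r hr hrL => hw r.2 hr.2 hrL.2,
        Sum.rec (fun i _ => w.map_zero) hzero, hone⟩

end Gorenstein

section Homogenize

variable {E ι : Type*} [NormedAddCommGroup E] [NormedSpace ℝ E]

/-- The embedding of `E` at height one, under which a polytope becomes a slice of a cone. -/
noncomputable def homogenize : E →ᵃ[ℝ] E × ℝ :=
  (AffineMap.id ℝ E).prod (AffineMap.const ℝ E 1)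

@[simp]
lemma homogenize_apply (x : E) : homogenize x = (x, 1) :=
  rfl

lemma span_homogenize_convexHull (s : Set E) :
    span ℝ (homogenize '' convexHull ℝ s) = span ℝ (homogenize '' s) := by
  rw [AffineMap.image_convexHull]
  exact le_antisymm (span_le.2 (convexHull_min subset_span (Submodule.convex _)))
    (span_mono (subset_convexHull ℝ _))

lemma span_homogenize {s : Set E} {p : E} (hp : p ∈ s) :
    span ℝ (homogenize '' s) =
      (vectorSpan ℝ s).map (LinearMap.inl ℝ E ℝ) ⊔ span ℝ {homogenize p} := by
  apply le_antisymm
  · rw [span_le]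
    rintro _ ⟨q, hq, rfl⟩
    have decomposition : homogenize q = LinearMap.inl ℝ E ℝ (q - p) + homogenize p := by simp
    rw [SetLike.mem_coe, decomposition]
    exact add_mem_sup (mem_map_of_mem (vsub_mem_vectorSpan ℝ hq hp)) (mem_span_singleton_self _)
  · refine sup_le ?_ (span_mono (Set.singleton_subset_iff.2 (Set.mem_image_of_mem _ hp)))
    rw [vectorSpan_def, map_span, span_le]
    rintro _ ⟨_, ⟨a, ha, b, hb, rfl⟩, rfl⟩
    have sub_mem_span : homogenize a - homogenize b ∈ span ℝ (homogenize '' s) :=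
      sub_mem (subset_span (Set.mem_image_of_mem _ ha)) (subset_span (Set.mem_image_of_mem _ hb))
    simpa using sub_mem_span

lemma finrank_span_homogenize [FiniteDimensional ℝ E] {s : Set E} (hs : s.Nonempty) :
    finrank ℝ (span ℝ (homogenize '' s)) = finrank ℝ (vectorSpan ℝ s) + 1 := by
  obtain ⟨p, hp⟩ := hs
  have homogenize_notMem : homogenize p ∉ (vectorSpan ℝ s).map (LinearMap.inl ℝ E ℝ) := by
    simp
  rw [span_homogenize hp, finrank_sup_span_singleton homogenize_notMem,
    (equivMapOfInjective (LinearMap.inl ℝ E ℝ) LinearMap.inl_injective _).finrank_eq]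

lemma homogenize_mem_span_iff {s : Set E} {x : E} :
    homogenize x ∈ span ℝ (homogenize '' s) ↔ x ∈ affineSpan ℝ s := by
  rcases s.eq_empty_or_nonempty with rfl | ⟨p, hp⟩
  · simpa using AffineSubspace.notMem_bot ℝ E x
  rw [span_homogenize hp, ← AffineSubspace.vsub_right_mem_direction_iff_mem
    (subset_affineSpan ℝ s hp), direction_affineSpan]
  constructor
  · intro hx
    obtain ⟨_, ⟨u, hu, rfl⟩, _, hc, hx⟩ := mem_sup.1 hx
    obtain ⟨c, rfl⟩ := mem_span_singleton.1 hc
    obtain ⟨rfl, rfl⟩ : u + c • p = x ∧ c = 1 := by simpa using hx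
    simpa using hu
  · intro hx
    exact mem_sup.2 ⟨_, mem_map_of_mem hx, _, mem_span_singleton_self (homogenize p), by simp⟩

lemma mk_mem_span_homogenize_iff {s : Set E} {x : E} {r : ℝ} (hr : r ≠ 0) :
    (x, r) ∈ span ℝ (homogenize '' s) ↔ x ∈ affineSpan ℝ (r • s) := by
  obtain ⟨y, rfl⟩ : ∃ y, x = r • y := ⟨r⁻¹ • x, (smul_inv_smul₀ hr x).symm⟩
  have smul_homogenize : (r • y, r) = r • homogenize y := by simp
  rw [smul_homogenize, Submodule.smul_mem_iff _ hr, homogenize_mem_span_iff,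
    ← AffineSubspace.smul_span, AffineSubspace.smul_mem_smul_iff₀ hr]

lemma exists_linearMap_mk_eq {r : ℝ} (hr : r ≠ 0)
    (u : E →ᵃ[ℝ] ℝ) : ∃ w : E × ℝ →ₗ[ℝ] ℝ, ∀ y, w (y, r) = u y :=
  ⟨u.linear.coprod ((LinearMap.id (R := ℝ)).smulRight (r⁻¹ * u 0)), fun y => by
    simp [hr, u.decomp']⟩

lemma mem_convexHull_range_iff [Fintype ι] {v : ι → E} {x : E} :
    x ∈ convexHull ℝ (Set.range v) ↔
      ∃ μ : ι → ℝ, (∀ i, 0 ≤ μ i) ∧ ∑ i, μ i • homogenize (v i) = homogenize x := by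
  classical
  have hull_eq : convexHull ℝ (Set.range v) = Fintype.linearCombination ℝ v '' stdSimplex ℝ ι := by
    rw [← convexHull_rangle_single_eq_stdSimplex, LinearMap.image_convexHull, ← Set.range_comp]
    simp [Function.comp_def]
  simp [hull_eq, stdSimplex, Prod.ext_iff, Prod.fst_sum, Prod.snd_sum,
    Fintype.linearCombination_apply, and_assoc, and_left_comm, and_comm]

lemma exists_lineMap_mem_of_mem_intrinsicInterior {s : Set E} {c x : E} (hc : c ∈ s)
    (hx : x ∈ intrinsicInterior ℝ s) : ∃ t > (1 : ℝ), AffineMap.lineMap c x t ∈ s := by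
  obtain ⟨y, hy, rfl⟩ := mem_intrinsicInterior.1 hx
  let φ (t : ℝ) : affineSpan ℝ s :=
    ⟨AffineMap.lineMap c (y : E) t, AffineMap.lineMap_mem t (subset_affineSpan ℝ s hc) y.2⟩
  have hφ : Continuous φ := AffineMap.lineMap_continuous.subtype_mk _
  have eventually_mem : ∀ᶠ t in nhds (1 : ℝ), φ t ∈ interior ((↑) ⁻¹' s : Set (affineSpan ℝ s)) :=
    hφ.continuousAt (isOpen_interior.mem_nhds (by simpa [φ] using hy))
  obtain ⟨t, ht, ht'⟩ :=
    ((eventually_mem.filter_mono nhdsWithin_le_nhds).and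
      (self_mem_nhdsWithin (s := Set.Ioi 1))).exists
  have mem_preimage : φ t ∈ ((↑) ⁻¹' s : Set (affineSpan ℝ s)) := interior_subset ht
  exact ⟨t, ht', mem_preimage⟩

lemma homogenize_mem_coneInterior [Fintype ι] {v : ι → E} {x : E}
    (hx : x ∈ intrinsicInterior ℝ (convexHull ℝ (Set.range v))) :
    homogenize x ∈ coneInterior (homogenize ∘ v) := by
  have : Nonempty ι :=
    Set.range_nonempty_iff_nonempty.1 (convexHull_nonempty_iff.1 ⟨x, intrinsicInterior_subset hx⟩)
  let k : ℝ := (Fintype.card ι : ℝ)⁻¹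
  have hk : 0 < k := by positivity
  let c : E := ∑ i, k • v i
  have hc : ∑ i, k • homogenize (v i) = homogenize c := by
    simp [Prod.ext_iff, Prod.fst_sum, Prod.snd_sum, c, k]
  -- Prolonging the segment from the centroid `c` to `x` writes `x` as a convex combination of `c`
  -- and another point of the hull, in which `c` contributes a positive weight to every vertex.
  obtain ⟨t, ht, htx⟩ := exists_lineMap_mem_of_mem_intrinsicInterior
    (mem_convexHull_range_iff.2 ⟨fun _ => k, fun _ => hk.le, hc⟩) hx
  obtain ⟨μ, hμ, hμt⟩ := mem_convexHull_range_iff.1 htx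
  have ht' : 0 < t - 1 := sub_pos.2 ht
  rw [← smul_mem_coneInterior_iff (one_pos.trans ht)]
  refine mem_coneInterior.2 ⟨fun i => μ i + (t - 1) * k, fun i => ?_, ?_⟩
  · exact add_pos_of_nonneg_of_pos (hμ i) (mul_pos ht' hk)
  · simp only [Function.comp_apply, add_smul, mul_smul, Finset.sum_add_distrib,
      ← Finset.smul_sum, hμt, hc]
    rw [AffineMap.apply_lineMap, AffineMap.lineMap_apply_module]
    module

lemma mem_intrinsicInterior_of_homogenize_mem [Fintype ι] {v : ι → E} {x : E}
    (hx : homogenize x ∈ coneInterior (homogenize ∘ v)) :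
    x ∈ intrinsicInterior ℝ (convexHull ℝ (Set.range v)) := by
  set P := convexHull ℝ (Set.range v)
  have mem_span_iff (y : E) :
      homogenize y ∈ span ℝ (Set.range (homogenize ∘ v)) ↔ y ∈ affineSpan ℝ P := by
    rw [Set.range_comp, ← span_homogenize_convexHull, homogenize_mem_span_iff]
  let φ (y : affineSpan ℝ P) : span ℝ (Set.range (homogenize ∘ v)) :=
    ⟨homogenize (y : E), (mem_span_iff y).2 y.2⟩
  have hφ : Continuous φ := (continuous_subtype_val.prodMk continuous_const).subtype_mk _
  have preimage_subset : φ ⁻¹' ((↑) ⁻¹' coneInterior (homogenize ∘ v)) ⊆ (↑) ⁻¹' P := by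
    rintro y ⟨μ, hμ, hy⟩
    exact mem_convexHull_range_iff.2 ⟨μ, fun i => (hμ i).le, hy⟩
  have hx' : x ∈ affineSpan ℝ P := (mem_span_iff x).1 (coneInterior_subset_span _ hx)
  exact mem_intrinsicInterior.2 ⟨⟨x, hx'⟩, mem_interior.2
    ⟨_, preimage_subset, (isOpen_preimage_coneInterior _).preimage hφ, hx⟩, rfl⟩

lemma intrinsicInterior_smul [FiniteDimensional ℝ E] {r : ℝ} (hr : r ≠ 0) (s : Set E) :
    intrinsicInterior ℝ (r • s) = r • intrinsicInterior ℝ s :=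
  (LinearEquiv.smulOfNeZero ℝ E r hr).toAffineEquiv.intrinsicInterior_image s

lemma mem_intrinsicInterior_smul_convexHull_range_iff [FiniteDimensional ℝ E] [Fintype ι]
    {v : ι → E} {x : E} {r : ℝ} (hr : 0 < r) :
    x ∈ intrinsicInterior ℝ (r • convexHull ℝ (Set.range v)) ↔
      (x, r) ∈ coneInterior (homogenize ∘ v) := by
  obtain ⟨y, rfl⟩ : ∃ y, x = r • y := ⟨r⁻¹ • x, (smul_inv_smul₀ hr.ne' x).symm⟩
  have smul_homogenize : (r • y, r) = r • homogenize y := by simp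
  rw [intrinsicInterior_smul hr.ne', Set.smul_mem_smul_set_iff₀ hr.ne', smul_homogenize,
    smul_mem_coneInterior_iff hr]
  exact ⟨homogenize_mem_coneInterior, mem_intrinsicInterior_of_homogenize_mem⟩

end Homogenize

section Faces

variable {E ι : Type*} [NormedAddCommGroup E] [NormedSpace ℝ E]

lemma convexHull_image_zeros_subset (v : ι → E) (l : E × ℝ →ₗ[ℝ] ℝ) :
    convexHull ℝ (v '' {i | l (homogenize (v i)) = 0}) ⊆ {x | l (homogenize x) = 0} := by
  refine convexHull_min (by rintro _ ⟨i, hi, rfl⟩; exact hi) ?_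
  exact (convex_singleton (0 : ℝ)).affine_preimage (l.toAffineMap.comp homogenize)

lemma convexHull_range_subset_nonneg {v : ι → E} {l : E × ℝ →ₗ[ℝ] ℝ}
    (hl : ∀ i, 0 ≤ l (homogenize (v i))) :
    convexHull ℝ (Set.range v) ⊆ {x | 0 ≤ l (homogenize x)} := by
  refine convexHull_min (by rintro _ ⟨i, rfl⟩; exact hl i) ?_
  exact (convex_Ici (0 : ℝ)).affine_preimage (l.toAffineMap.comp homogenize)

lemma setOf_mem_convexHull_range_eq_zero [Finite ι] {v : ι → E} {l : E × ℝ →ₗ[ℝ] ℝ}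
    (hl : ∀ i, 0 ≤ l (homogenize (v i))) :
    {x ∈ convexHull ℝ (Set.range v) | l (homogenize x) = 0} =
      convexHull ℝ (v '' {i | l (homogenize (v i)) = 0}) := by
  classical
  have := Fintype.ofFinite ι
  refine Set.Subset.antisymm ?_ fun x hx =>
    ⟨convexHull_mono (Set.image_subset_range v _) hx, convexHull_image_zeros_subset v l hx⟩
  rintro x ⟨hx, hlx⟩
  obtain ⟨μ, hμ, hμx⟩ := mem_convexHull_range_iff.1 hx
  have sum_eq_zero : ∑ i, μ i * l (homogenize (v i)) = 0 := by
    rw [← hlx, ← hμx]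
    simp only [map_sum, map_smul, smul_eq_mul]
  have coefficient_or_value (i : ι) : μ i = 0 ∨ l (homogenize (v i)) = 0 :=
    mul_eq_zero.1 ((Finset.sum_eq_zero_iff_of_nonneg fun i _ => mul_nonneg (hμ i) (hl i)).1
      sum_eq_zero i (Finset.mem_univ i))
  obtain ⟨hx, hμ_one⟩ : ∑ i, μ i • v i = x ∧ ∑ i, μ i = 1 := by
    simpa [Prod.ext_iff, Prod.fst_sum, Prod.snd_sum] using hμx
  rw [← hx, ← Finset.sum_filter_of_ne (p := fun i => l (homogenize (v i)) = 0)
    fun i _ hi => (coefficient_or_value i).resolve_left (left_ne_zero_of_smul hi)]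
  refine (convex_convexHull ℝ _).sum_mem (fun i _ => hμ i) ?_
    fun i hi => subset_convexHull ℝ _ ⟨i, (Finset.mem_filter.1 hi).2, rfl⟩
  rwa [Finset.sum_filter_of_ne fun i _ hi => (coefficient_or_value i).resolve_left hi]

lemma exists_linearMap_of_isExposed {s t : Set E} (h : IsExposed ℝ s t) (ht : t.Nonempty) :
    ∃ l : E × ℝ →ₗ[ℝ] ℝ, (∀ x ∈ s, 0 ≤ l (homogenize x)) ∧
      t = {x ∈ s | l (homogenize x) = 0} := by
  obtain ⟨φ, ht_eq⟩ := h ht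
  obtain ⟨x₀, hx₀⟩ := ht
  obtain ⟨hx₀s, hmax⟩ : x₀ ∈ s ∧ ∀ y ∈ s, φ y ≤ φ x₀ := by simpa [ht_eq] using hx₀
  let l := φ x₀ • LinearMap.snd ℝ E ℝ - φ.toLinearMap ∘ₗ LinearMap.fst ℝ E ℝ
  have l_homogenize (x : E) : l (homogenize x) = φ x₀ - φ x := by simp [l]
  refine ⟨l, fun x hx => ?_, ?_⟩
  · rw [l_homogenize]
    exact sub_nonneg.2 (hmax x hx)
  · rw [ht_eq]
    ext x
    simp only [Set.mem_ofPred_eq, l_homogenize, sub_eq_zero]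
    exact and_congr_right fun hx =>
      ⟨fun h => (h x₀ hx₀s).antisymm (hmax x hx), fun h y hy => h ▸ hmax y hy⟩

lemma isExposed_setOf_eq_zero [FiniteDimensional ℝ E] {s : Set E} {l : E × ℝ →ₗ[ℝ] ℝ}
    (hl : ∀ x ∈ s, 0 ≤ l (homogenize x)) :
    IsExposed ℝ s {x ∈ s | l (homogenize x) = 0} := by
  rintro ⟨z, hz, hlz⟩
  have l_homogenize (x : E) : l (homogenize x) = l (x, 0) + l (0, 1) := by
    rw [← map_add]; simp
  refine ⟨-(l ∘ₗ LinearMap.inl ℝ E ℝ).toContinuousLinearMap, ?_⟩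
  ext x
  refine and_congr_right fun hx => ?_
  have le_iff (y : E) : (-(l ∘ₗ LinearMap.inl ℝ E ℝ).toContinuousLinearMap) y ≤
      (-(l ∘ₗ LinearMap.inl ℝ E ℝ).toContinuousLinearMap) x ↔
        l (homogenize x) ≤ l (homogenize y) := by
    rw [l_homogenize, l_homogenize]
    simp
  simp only [le_iff]
  exact ⟨fun h y hy => h ▸ hl y hy, fun h => ((h z hz).trans_eq hlz).antisymm (hl x hx)⟩

end Faces

section Facets

variable {d : ℕ}

lemma polyDim_smul {c : ℝ} (hc : c ≠ 0) (P : Set (Fin d → ℝ)) : polyDim (c • P) = polyDim P := by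
  rw [polyDim, polyDim, ← AffineSubspace.smul_span, AffineSubspace.direction_smul hc]

lemma IsFacet.smul_s19 {P Φ : Set (Fin d → ℝ)} {c : ℝ} (hc : c ≠ 0) (h : IsFacet P Φ) :
    IsFacet (c • P) (c • Φ) := by
  obtain ⟨hexp, hne, hdim⟩ := h
  refine ⟨fun _ => ?_, hne.smul_set, by rwa [polyDim_smul hc, polyDim_smul hc]⟩
  obtain ⟨φ, rfl⟩ := hexp hne
  refine ⟨c⁻¹ • φ, ?_⟩
  ext x
  obtain ⟨x, rfl⟩ : ∃ y, x = c • y := ⟨c⁻¹ • x, (smul_inv_smul₀ hc x).symm⟩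
  simp [← Set.image_smul, hc]

lemma finrank_span_homogenize_comp_image {ι : Type*} (v : ι → Fin d → ℝ) {s : Set ι}
    (hs : s.Nonempty) :
    finrank ℝ (span ℝ ((homogenize ∘ v) '' s)) = polyDim (convexHull ℝ (v '' s)) + 1 := by
  rw [Set.image_comp, finrank_span_homogenize (hs.image v), polyDim, affineSpan_convexHull,
    direction_affineSpan]

lemma finrank_span_range_homogenize_comp {ι : Type*} [Nonempty ι] (v : ι → Fin d → ℝ) :
    finrank ℝ (span ℝ (Set.range (homogenize ∘ v))) =
      polyDim (convexHull ℝ (Set.range v)) + 1 := by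
  rw [← Set.image_univ, finrank_span_homogenize_comp_image v Set.univ_nonempty, Set.image_univ]

lemma IsFacetFunctional.zeros_nonempty_iff {ι : Type*} [Nonempty ι] {v : ι → Fin d → ℝ}
    {l : (Fin d → ℝ) × ℝ →ₗ[ℝ] ℝ} (hl : IsFacetFunctional (homogenize ∘ v) l) :
    {i | l (homogenize (v i)) = 0}.Nonempty ↔ polyDim (convexHull ℝ (Set.range v)) ≠ 0 := by
  have finrank_eq : finrank ℝ (span ℝ ((homogenize ∘ v) '' {i | l (homogenize (v i)) = 0})) =
      polyDim (convexHull ℝ (Set.range v)) :=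
    Nat.add_right_cancel (hl.finrank_add_one.trans (finrank_span_range_homogenize_comp v))
  rw [← finrank_eq]
  rcases Set.eq_empty_or_nonempty {i | l (homogenize (v i)) = 0} with hempty | hne
  · rw [hempty, Set.image_empty, span_empty, finrank_bot]
    exact ⟨fun h => (Set.not_nonempty_empty h).elim, fun h => (h rfl).elim⟩
  · rw [finrank_span_homogenize_comp_image v hne]
    exact iff_of_true hne (Nat.succ_ne_zero _)

lemma isFacet_convexHull_range_iff {ι : Type*} [Finite ι] {v : ι → Fin d → ℝ}
    {Φ : Set (Fin d → ℝ)} :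
    IsFacet (convexHull ℝ (Set.range v)) Φ ↔ ∃ l, IsFacetFunctional (homogenize ∘ v) l ∧
      {i | l (homogenize (v i)) = 0}.Nonempty ∧
      Φ = convexHull ℝ (v '' {i | l (homogenize (v i)) = 0}) := by
  have polyDim_iff {l : (Fin d → ℝ) × ℝ →ₗ[ℝ] ℝ}
      (hne : {i | l (homogenize (v i)) = 0}.Nonempty) :
      polyDim (convexHull ℝ (v '' {i | l (homogenize (v i)) = 0})) + 1 =
          polyDim (convexHull ℝ (Set.range v)) ↔
        finrank ℝ (span ℝ ((homogenize ∘ v) '' {i | l (homogenize (v i)) = 0})) + 1 =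
          finrank ℝ (span ℝ (Set.range (homogenize ∘ v))) := by
    have := hne.to_type
    rw [finrank_span_homogenize_comp_image v hne, finrank_span_range_homogenize_comp,
      Nat.add_right_cancel_iff]
  constructor
  · rintro ⟨hexp, hne, hdim⟩
    obtain ⟨l, hl, rfl⟩ := exists_linearMap_of_isExposed hexp hne
    have hl (i : ι) : 0 ≤ l (homogenize (v i)) :=
      hl (v i) (subset_convexHull ℝ _ (Set.mem_range_self i))
    rw [setOf_mem_convexHull_range_eq_zero hl] at hne hdim ⊢
    have hne := (convexHull_nonempty_iff.1 hne).of_image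
    exact ⟨l, ⟨hl, (polyDim_iff hne).1 hdim⟩, hne, rfl⟩
  · rintro ⟨l, hl, hne, rfl⟩
    refine ⟨?_, (hne.image v).convexHull, (polyDim_iff hne).2 hl.finrank_add_one⟩
    rw [← setOf_mem_convexHull_range_eq_zero hl.nonneg]
    exact isExposed_setOf_eq_zero (convexHull_range_subset_nonneg hl.nonneg)

end Facets

section Lattice

variable {d : ℕ} {ι : Type*}

/-- The lattice `ℤ^d × ℤ` of the space containing the cone over a polytope in `ℝ^d`. -/
def coneLattice (d : ℕ) : AddSubgroup ((Fin d → ℝ) × ℝ) :=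
  (AddSubgroup.pi Set.univ fun _ => (Int.castAddHom ℝ).range).prod (Int.castAddHom ℝ).range

lemma mem_coneLattice {p : (Fin d → ℝ) × ℝ} :
    p ∈ coneLattice d ↔ IsLatticePt p.1 ∧ ∃ z : ℤ, p.2 = z := by
  simp only [coneLattice, AddSubgroup.mem_prod, AddSubgroup.mem_pi, AddMonoidHom.mem_range,
    Int.coe_castAddHom, Set.mem_univ, true_implies, IsLatticePt, eq_comm]

lemma mk_natCast_mem_coneLattice {x : Fin d → ℝ} (hx : IsLatticePt x) (r : ℕ) :
    (x, (r : ℝ)) ∈ coneLattice d :=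
  mem_coneLattice.2 ⟨hx, r, by simp⟩

lemma homogenize_mem_coneLattice {x : Fin d → ℝ} (hx : IsLatticePt x) :
    homogenize x ∈ coneLattice d := by
  simpa using mk_natCast_mem_coneLattice hx 1

lemma mk_mem_span_range_homogenize_comp_iff {v : ι → Fin d → ℝ} {x : Fin d → ℝ} {r : ℝ}
    (hr : r ≠ 0) :
    (x, r) ∈ span ℝ (Set.range (homogenize ∘ v)) ↔
      x ∈ affineSpan ℝ (r • convexHull ℝ (Set.range v)) := by
  rw [← mk_mem_span_homogenize_iff hr, span_homogenize_convexHull, Set.range_comp]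

/-- Adding a multiple of a generator on which `w` vanishes moves a lattice point to height `r`
without changing its value. -/
lemma exists_intCast_eq_of_mem_span {v : ι → Fin d → ℝ} (hv : ∀ i, IsLatticePt (v i))
    {w : (Fin d → ℝ) × ℝ →ₗ[ℝ] ℝ} {i₀ : ι} (hi₀ : w (homogenize (v i₀)) = 0) {r : ℕ}
    (hw : ∀ y, (y, (r : ℝ)) ∈ span ℝ (Set.range (homogenize ∘ v)) → IsLatticePt y →
      ∃ z : ℤ, w (y, r) = z)
    {q : (Fin d → ℝ) × ℝ} (hq : q ∈ span ℝ (Set.range (homogenize ∘ v)))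
    (hqL : q ∈ coneLattice d) : ∃ z : ℤ, w q = z := by
  obtain ⟨-, a, ha⟩ := mem_coneLattice.1 hqL
  obtain ⟨y, hy⟩ : ∃ y, q + (r - a : ℤ) • homogenize (v i₀) = (y, (r : ℝ)) :=
    ⟨_, Prod.ext rfl (by simp [ha])⟩
  have hyL : (y, (r : ℝ)) ∈ coneLattice d :=
    hy ▸ add_mem hqL (zsmul_mem (homogenize_mem_coneLattice (hv i₀)) _)
  have hy_span : (y, (r : ℝ)) ∈ span ℝ (Set.range (homogenize ∘ v)) :=
    hy ▸ add_mem hq (zsmul_mem (subset_span (Set.mem_range_self i₀)) _)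
  have w_eq : w q = w (y, (r : ℝ)) := by
    rw [← hy, map_add, map_zsmul, hi₀, smul_zero, add_zero]
  rw [w_eq]
  exact hw y hy_span (mem_coneLattice.1 hyL).1

variable [Fintype ι] [Nonempty ι] {v : ι → Fin d → ℝ} {p : (Fin d → ℝ) × ℝ}

lemma snd_pos_of_mem_coneInterior (hp : p ∈ coneInterior (homogenize ∘ v)) : 0 < p.2 := by
  obtain ⟨μ, hμ, rfl⟩ := mem_coneInterior.1 hp
  simpa [Prod.snd_sum] using Finset.sum_pos (fun i _ => hμ i) Finset.univ_nonempty

lemma exists_natCast_eq_snd (hpL : p ∈ coneLattice d)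
    (hp : p ∈ coneInterior (homogenize ∘ v)) : ∃ r : ℕ, 0 < r ∧ p.2 = r := by
  obtain ⟨-, z, hz⟩ := mem_coneLattice.1 hpL
  have hz_pos : 0 < z := by exact_mod_cast hz ▸ snd_pos_of_mem_coneInterior hp
  lift z to ℕ using hz_pos.le
  exact ⟨z, by exact_mod_cast hz_pos, by exact_mod_cast hz⟩

lemma exists_mem_coneInterior_snd_eq_polyDim_add_one (hv : ∀ i, IsLatticePt (v i)) :
    ∃ p ∈ coneLattice d, p ∈ coneInterior (homogenize ∘ v) ∧
      p.2 = (polyDim (convexHull ℝ (Set.range v)) + 1 : ℕ) := by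
  obtain ⟨s, hs⟩ := exists_sum_mem_coneInterior (homogenize ∘ v)
  refine ⟨_, sum_mem fun k _ => homogenize_mem_coneLattice (hv (s k)), hs, ?_⟩
  simp [Prod.snd_sum, ← finrank_span_range_homogenize_comp]

end Lattice

section Reflexive

variable {d : ℕ} {ι : Type*} [Fintype ι] [Nonempty ι] {v : ι → Fin d → ℝ}

lemma IsGorensteinPoint.isGorenstein {p : (Fin d → ℝ) × ℝ}
    (hp : IsGorensteinPoint (coneLattice d) (homogenize ∘ v) p) :
    IsGorenstein (convexHull ℝ (Set.range v)) := by
  obtain ⟨r, hr, hpr⟩ := exists_natCast_eq_snd hp.mem_lattice hp.mem_coneInterior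
  obtain ⟨x, t⟩ := p
  obtain rfl : t = r := hpr
  have hr₀ : (r : ℝ) ≠ 0 := by positivity
  refine ⟨r, hr, x, (mem_intrinsicInterior_smul_convexHull_range_iff (by positivity)).2
    hp.mem_coneInterior, (mem_coneLattice.1 hp.mem_lattice).1, fun Φ hΦ => ?_⟩
  have facet_unscaled := hΦ.smul_s19 (inv_ne_zero hr₀)
  rw [inv_smul_smul₀ hr₀] at facet_unscaled
  obtain ⟨l, hl, -, hΦ_eq⟩ := isFacet_convexHull_range_iff.1 facet_unscaled
  obtain ⟨w, hw, hzero, hone⟩ := hp.exists_functional l hl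
  refine ⟨-(w.toAffineMap.comp ((AffineMap.id ℝ _).prod (AffineMap.const ℝ _ (r : ℝ)))), ?_, ?_⟩
  · intro y hy hyL
    obtain ⟨z, hz⟩ := hw (y, r) ((mk_mem_span_range_homogenize_comp_iff hr₀).2 hy)
      (mk_natCast_mem_coneLattice hyL r)
    exact ⟨-z, by simpa using hz⟩
  · intro f hf
    have mem_hull : (r : ℝ)⁻¹ • f ∈ convexHull ℝ (v '' {i | l (homogenize (v i)) = 0}) :=
      hΦ_eq ▸ Set.smul_mem_smul_set hf
    have w_eq_zero : w (homogenize ((r : ℝ)⁻¹ • f)) = 0 :=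
      convexHull_image_zeros_subset v w (convexHull_mono (Set.image_mono hzero) mem_hull)
    have smul_homogenize : (f, (r : ℝ)) = (r : ℝ) • homogenize ((r : ℝ)⁻¹ • f) := by
      simp [hr₀]
    have w_facet : w (f, (r : ℝ)) = 0 := by rw [smul_homogenize, map_smul, w_eq_zero, smul_zero]
    simp [w_facet, hone]

lemma exists_isGorensteinPoint_of_polyDim_eq_zero (hv : ∀ i, IsLatticePt (v i))
    (hdim : polyDim (convexHull ℝ (Set.range v)) = 0) :
    ∃ p, IsGorensteinPoint (coneLattice d) (homogenize ∘ v) p := by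
  obtain ⟨p, hpL, hp, hp_snd⟩ := exists_mem_coneInterior_snd_eq_polyDim_add_one hv
  refine ⟨p, hpL, hp, fun l hl => ⟨LinearMap.snd ℝ _ ℝ, ?_, ?_, by simp [hp_snd, hdim]⟩⟩
  · exact fun q _ hq => (mem_coneLattice.1 hq).2
  · exact fun i hi => (hl.zeros_nonempty_iff.1 ⟨i, hi⟩ hdim).elim

lemma exists_isGorensteinPoint_of_polyDim_ne_zero (hv : ∀ i, IsLatticePt (v i))
    (hdim : polyDim (convexHull ℝ (Set.range v)) ≠ 0)
    (h : IsGorenstein (convexHull ℝ (Set.range v))) :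
    ∃ p, IsGorensteinPoint (coneLattice d) (homogenize ∘ v) p := by
  obtain ⟨r, hr, x, hx, hxL, hfacet⟩ := h
  have hr₀ : (r : ℝ) ≠ 0 := by positivity
  refine ⟨(x, r), mk_natCast_mem_coneLattice hxL r,
    (mem_intrinsicInterior_smul_convexHull_range_iff (by positivity)).1 hx, fun l hl => ?_⟩
  obtain ⟨i₀, hi₀⟩ := hl.zeros_nonempty_iff.2 hdim
  obtain ⟨u, hu, hu_facet⟩ := hfacet _
    ((isFacet_convexHull_range_iff.2 ⟨l, hl, ⟨i₀, hi₀⟩, rfl⟩).smul_s19 hr₀)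
  have u_smul (i : ι) (hi : l (homogenize (v i)) = 0) : u ((r : ℝ) • v i) = u x + 1 :=
    hu_facet _ (Set.smul_mem_smul_set (subset_convexHull ℝ _ ⟨i, hi, rfl⟩))
  obtain ⟨z, hz⟩ := hu x (subset_affineSpan ℝ _ (intrinsicInterior_subset hx)) hxL
  obtain ⟨w, hw⟩ := exists_linearMap_mk_eq hr₀ (AffineMap.const ℝ _ (u x + 1) - u)
  have w_apply (y : Fin d → ℝ) : w (y, (r : ℝ)) = u x + 1 - u y := hw y
  have w_zero (i : ι) (hi : l (homogenize (v i)) = 0) : w (homogenize (v i)) = 0 := by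
    have smul_homogenize : (r : ℝ) • homogenize (v i) = ((r : ℝ) • v i, (r : ℝ)) := by simp
    refine (mul_eq_zero.1 ?_).resolve_left hr₀
    rw [← smul_eq_mul, ← map_smul, smul_homogenize, w_apply, u_smul i hi, sub_self]
  have w_integral (y : Fin d → ℝ) (hy : (y, (r : ℝ)) ∈ span ℝ (Set.range (homogenize ∘ v)))
      (hyL : IsLatticePt y) : ∃ b : ℤ, w (y, r) = b := by
    obtain ⟨b, hb⟩ := hu y ((mk_mem_span_range_homogenize_comp_iff hr₀).1 hy) hyL
    exact ⟨z + 1 - b, by rw [w_apply, hz, hb]; push_cast; rfl⟩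
  exact ⟨w, fun q => exists_intCast_eq_of_mem_span hv (w_zero i₀ hi₀) w_integral, w_zero,
    by simp [w_apply]⟩

lemma exists_isGorensteinPoint (hv : ∀ i, IsLatticePt (v i))
    (h : IsGorenstein (convexHull ℝ (Set.range v))) :
    ∃ p, IsGorensteinPoint (coneLattice d) (homogenize ∘ v) p := by
  rcases eq_or_ne (polyDim (convexHull ℝ (Set.range v))) 0 with hdim | hdim
  · exact exists_isGorensteinPoint_of_polyDim_eq_zero hv hdim
  · exact exists_isGorensteinPoint_of_polyDim_ne_zero hv hdim h

end Reflexive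

section Codegree

variable {d : ℕ} {ι : Type*} [Fintype ι]

/-- The heights of the interior lattice points of the cone over the convex hull of `v`, that is,
the dilation factors for which that polytope is not hollow. -/
def interiorHeights (v : ι → Fin d → ℝ) : Set ℕ :=
  {r | ∃ p ∈ coneLattice d, p ∈ coneInterior (homogenize ∘ v) ∧ p.2 = r}

variable [Nonempty ι] {v : ι → Fin d → ℝ}

lemma polyCodeg_convexHull_range (v : ι → Fin d → ℝ) :
    polyCodeg (convexHull ℝ (Set.range v)) = sInf (interiorHeights v) := by
  refine congrArg sInf (Set.ext fun r => ⟨?_, ?_⟩)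
  · rintro ⟨hr, hr_hollow⟩
    obtain ⟨x, hx, hxL⟩ :
        ∃ x ∈ intrinsicInterior ℝ ((r : ℝ) • convexHull ℝ (Set.range v)), IsLatticePt x := by
      simpa [IsHollow] using hr_hollow
    exact ⟨(x, r), mk_natCast_mem_coneLattice hxL r,
      (mem_intrinsicInterior_smul_convexHull_range_iff (by positivity)).1 hx, rfl⟩
  · rintro ⟨⟨x, t⟩, hpL, hp, rfl : t = r⟩
    have hr : 0 < (r : ℝ) := snd_pos_of_mem_coneInterior hp
    exact ⟨by exact_mod_cast hr, fun hollow => hollow x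
      ((mem_intrinsicInterior_smul_convexHull_range_iff hr).2 hp) (mem_coneLattice.1 hpL).1⟩

lemma polyDim_add_one_mem_interiorHeights (hv : ∀ i, IsLatticePt (v i)) :
    polyDim (convexHull ℝ (Set.range v)) + 1 ∈ interiorHeights v :=
  exists_mem_coneInterior_snd_eq_polyDim_add_one hv

end Codegree

lemma polyCodeg_convexHull_range_le {d : ℕ} {ι : Type*} [Finite ι] [Nonempty ι]
    {v : ι → Fin d → ℝ} (hv : ∀ i, IsLatticePt (v i)) :
    polyCodeg (convexHull ℝ (Set.range v)) ≤ polyDim (convexHull ℝ (Set.range v)) + 1 := by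
  have := Fintype.ofFinite ι
  rw [polyCodeg_convexHull_range]
  exact Nat.sInf_le (polyDim_add_one_mem_interiorHeights hv)

lemma sInf_add_eq_sInf_add_sInf {A B : Set ℕ} (hA : A.Nonempty) (hB : B.Nonempty) :
    sInf (A + B) = sInf A + sInf B := by
  refine IsLeast.csInf_eq ⟨Set.add_mem_add (Nat.sInf_mem hA) (Nat.sInf_mem hB), ?_⟩
  rintro _ ⟨a, ha, b, hb, rfl⟩
  exact add_le_add (Nat.sInf_le ha) (Nat.sInf_le hb)

section FreeJoin

/-- The linear isomorphism identifying the direct sum of the spaces containing the cones over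
`F ⊆ ℝ^m` and `G ⊆ ℝ^n` with the space containing the cone over their free join. -/
def joinEquiv (m n : ℕ) :
    (((Fin m → ℝ) × ℝ) × ((Fin n → ℝ) × ℝ)) ≃ₗ[ℝ] ((Fin (m + n + 1) → ℝ) × ℝ) where
  toFun p := (Fin.snoc (α := fun _ => ℝ) (Fin.append p.1.1 p.2.1) p.2.2, p.1.2 + p.2.2)
  invFun q := ((fun i => q.1 (Fin.castSucc (Fin.castAdd n i)), q.2 - q.1 (Fin.last _)),
    (fun i => q.1 (Fin.castSucc (Fin.natAdd m i)), q.1 (Fin.last _)))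
  map_add' p q := by
    refine Prod.ext (funext (Fin.lastCases ?_ (Fin.addCases ?_ ?_))) ?_ <;>
      simp [-Fin.castSucc_natAdd, add_add_add_comm]
  map_smul' c p := by
    refine Prod.ext (funext (Fin.lastCases ?_ (Fin.addCases ?_ ?_))) ?_ <;>
      simp [-Fin.castSucc_natAdd, mul_add]
  left_inv p := by
    ext <;> simp [-Fin.castSucc_natAdd]
  right_inv q := by
    refine Prod.ext (funext (Fin.lastCases ?_ (Fin.addCases ?_ ?_))) ?_ <;>
      simp [-Fin.castSucc_natAdd]

variable {m n : ℕ}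

lemma joinEquiv_inl_homogenize (x : Fin m → ℝ) :
    joinEquiv m n (LinearMap.inl ℝ _ _ (homogenize x)) =
      homogenize (Fin.snoc (α := fun _ => ℝ) (Fin.append x (0 : Fin n → ℝ)) 0) := by
  simp [joinEquiv]

lemma joinEquiv_inr_homogenize (y : Fin n → ℝ) :
    joinEquiv m n (LinearMap.inr ℝ _ _ (homogenize y)) =
      homogenize (Fin.snoc (α := fun _ => ℝ) (Fin.append (0 : Fin m → ℝ) y) 1) := by
  simp [joinEquiv]

lemma isLatticePt_append_iff {x : Fin m → ℝ} {y : Fin n → ℝ} :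
    IsLatticePt (Fin.append x y) ↔ IsLatticePt x ∧ IsLatticePt y :=
  ⟨fun h =>
      ⟨fun i => by simpa using h (Fin.castAdd n i), fun j => by simpa using h (Fin.natAdd m j)⟩,
    fun ⟨hx, hy⟩ => Fin.addCases (fun i => by simpa using hx i) (fun j => by simpa using hy j)⟩

lemma isLatticePt_snoc_iff {x : Fin m → ℝ} {t : ℝ} :
    IsLatticePt (Fin.snoc (α := fun _ => ℝ) x t) ↔ IsLatticePt x ∧ ∃ z : ℤ, t = z := by
  simp [IsLatticePt, Fin.forall_fin_succ']

lemma coneLattice_comap_joinEquiv :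
    (coneLattice (m + n + 1)).comap (joinEquiv m n).toLinearMap.toAddMonoidHom =
      (coneLattice m).prod (coneLattice n) := by
  ext ⟨⟨x, s⟩, y, t⟩
  have mem_iff : joinEquiv m n ((x, s), y, t) ∈ coneLattice (m + n + 1) ↔
      ((IsLatticePt x ∧ IsLatticePt y) ∧ ∃ z : ℤ, t = z) ∧ ∃ z : ℤ, s + t = z := by
    rw [← isLatticePt_append_iff, ← isLatticePt_snoc_iff, mem_coneLattice]
    rfl
  have add_iff {z : ℤ} : (∃ z' : ℤ, s + z = z') ↔ ∃ z' : ℤ, s = z' :=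
    ⟨fun ⟨z', h⟩ => ⟨z' - z, by push_cast; linarith⟩, fun ⟨z', h⟩ => ⟨z' + z, by push_cast; rw [h]⟩⟩
  refine mem_iff.trans ?_
  simp only [AddSubgroup.mem_prod, mem_coneLattice]
  constructor
  · rintro ⟨⟨⟨hx, hy⟩, z, rfl⟩, hs⟩
    exact ⟨⟨hx, add_iff.1 hs⟩, hy, z, rfl⟩
  · rintro ⟨⟨hx, hs⟩, hy, z, rfl⟩
    exact ⟨⟨⟨hx, hy⟩, z, rfl⟩, add_iff.2 hs⟩

variable {ι κ : Type*} (v : ι → Fin m → ℝ) (w : κ → Fin n → ℝ)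

/-- The vertices of the free join of the convex hulls of `v` and `w`. -/
def joinVertices : ι ⊕ κ → Fin (m + n + 1) → ℝ :=
  Sum.elim (fun i => Fin.snoc (Fin.append (v i) 0) 0) (fun k => Fin.snoc (Fin.append 0 (w k)) 1)

lemma homogenize_comp_joinVertices :
    homogenize ∘ joinVertices v w = joinEquiv m n ∘
      Sum.elim (LinearMap.inl ℝ _ _ ∘ homogenize ∘ v) (LinearMap.inr ℝ _ _ ∘ homogenize ∘ w) := by
  funext i
  rcases i with i | k
  · exact (joinEquiv_inl_homogenize (v i)).symm
  · exact (joinEquiv_inr_homogenize (w k)).symm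

lemma freeJoin_convexHull_range :
    freeJoin (convexHull ℝ (Set.range v)) (convexHull ℝ (Set.range w)) =
      convexHull ℝ (Set.range (joinVertices v w)) := by
  let L : (Fin m → ℝ) →ᵃ[ℝ] Fin (m + n + 1) → ℝ :=
    (LinearMap.fst ℝ _ ℝ ∘ₗ (joinEquiv m n).toLinearMap ∘ₗ LinearMap.inl ℝ _ _).toAffineMap.comp
      homogenize
  let R : (Fin n → ℝ) →ᵃ[ℝ] Fin (m + n + 1) → ℝ :=
    (LinearMap.fst ℝ _ ℝ ∘ₗ (joinEquiv m n).toLinearMap ∘ₗ LinearMap.inr ℝ _ _).toAffineMap.comp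
      homogenize
  calc freeJoin (convexHull ℝ (Set.range v)) (convexHull ℝ (Set.range w))
      = convexHull ℝ (L '' convexHull ℝ (Set.range v) ∪ R '' convexHull ℝ (Set.range w)) := rfl
    _ = convexHull ℝ (L '' Set.range v ∪ R '' Set.range w) := by
      rw [AffineMap.image_convexHull, AffineMap.image_convexHull, convexHull_convexHull_union_left,
        convexHull_convexHull_union_right]
    _ = convexHull ℝ (Set.range (joinVertices v w)) := by
      rw [joinVertices, Set.Sum.elim_range, ← Set.range_comp, ← Set.range_comp]
      rfl

variable {v w}

lemma polyDim_freeJoin_convexHull_range [Finite ι] [Nonempty ι] [Finite κ] [Nonempty κ] :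
    polyDim (freeJoin (convexHull ℝ (Set.range v)) (convexHull ℝ (Set.range w))) =
      polyDim (convexHull ℝ (Set.range v)) + polyDim (convexHull ℝ (Set.range w)) + 1 := by
  have finrank_eq := finrank_span_range_homogenize_comp (joinVertices v w)
  rw [homogenize_comp_joinVertices, Set.range_comp, finrank_span_image_linearEquiv,
    range_sumElim_inl_inr, finrank_span_inl_union_inr (Set.finite_range _) (Set.finite_range _),
    finrank_span_range_homogenize_comp, finrank_span_range_homogenize_comp,
    ← freeJoin_convexHull_range] at finrank_eq
  lia

lemma mem_coneInterior_joinVertices_iff [Fintype ι] [Fintype κ]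
    {p : ((Fin m → ℝ) × ℝ) × ((Fin n → ℝ) × ℝ)} :
    joinEquiv m n p ∈ coneInterior (homogenize ∘ joinVertices v w) ↔
      p.1 ∈ coneInterior (homogenize ∘ v) ∧ p.2 ∈ coneInterior (homogenize ∘ w) := by
  rw [homogenize_comp_joinVertices, coneInterior_linearEquiv_comp, coneInterior_sumElim,
    (joinEquiv m n).injective.mem_set_image, Set.mem_prod]

lemma interiorHeights_joinVertices [Fintype ι] [Nonempty ι] [Fintype κ] [Nonempty κ] :
    interiorHeights (joinVertices v w) = interiorHeights v + interiorHeights w := by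
  ext r
  constructor
  · rintro ⟨p, hpL, hp, hpr⟩
    obtain ⟨⟨a, b⟩, rfl⟩ := (joinEquiv m n).surjective p
    obtain ⟨ha, hb⟩ := mem_coneInterior_joinVertices_iff.1 hp
    obtain ⟨haL, hbL⟩ : (a, b) ∈ (coneLattice m).prod (coneLattice n) :=
      coneLattice_comap_joinEquiv ▸ hpL
    obtain ⟨i, -, hi⟩ := exists_natCast_eq_snd haL ha
    obtain ⟨j, -, hj⟩ := exists_natCast_eq_snd hbL hb
    refine ⟨i, ⟨a, haL, ha, hi⟩, j, ⟨b, hbL, hb, hj⟩, ?_⟩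
    have heights_add : a.2 + b.2 = r := hpr
    rw [hi, hj] at heights_add
    exact_mod_cast heights_add
  · rintro ⟨i, ⟨a, haL, ha, hi⟩, j, ⟨b, hbL, hb, hj⟩, rfl⟩
    have mem_lattice : (a, b) ∈ (coneLattice m).prod (coneLattice n) := ⟨haL, hbL⟩
    rw [← coneLattice_comap_joinEquiv] at mem_lattice
    refine ⟨_, mem_lattice, mem_coneInterior_joinVertices_iff.2 ⟨ha, hb⟩, ?_⟩
    simp [joinEquiv, hi, hj]

lemma polyCodeg_freeJoin_convexHull_range [Finite ι] [Nonempty ι] [Finite κ] [Nonempty κ]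
    (hv : ∀ i, IsLatticePt (v i)) (hw : ∀ k, IsLatticePt (w k)) :
    polyCodeg (freeJoin (convexHull ℝ (Set.range v)) (convexHull ℝ (Set.range w))) =
      polyCodeg (convexHull ℝ (Set.range v)) + polyCodeg (convexHull ℝ (Set.range w)) := by
  have := Fintype.ofFinite ι
  have := Fintype.ofFinite κ
  rw [freeJoin_convexHull_range, polyCodeg_convexHull_range, polyCodeg_convexHull_range,
    polyCodeg_convexHull_range, interiorHeights_joinVertices, sInf_add_eq_sInf_add_sInf
      ⟨_, polyDim_add_one_mem_interiorHeights hv⟩ ⟨_, polyDim_add_one_mem_interiorHeights hw⟩]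

lemma isGorenstein_freeJoin_convexHull_range [Finite ι] [Nonempty ι] [Finite κ] [Nonempty κ]
    (hv : ∀ i, IsLatticePt (v i)) (hw : ∀ k, IsLatticePt (w k))
    (hvG : IsGorenstein (convexHull ℝ (Set.range v)))
    (hwG : IsGorenstein (convexHull ℝ (Set.range w))) :
    IsGorenstein (freeJoin (convexHull ℝ (Set.range v)) (convexHull ℝ (Set.range w))) := by
  have := Fintype.ofFinite ι
  have := Fintype.ofFinite κ
  obtain ⟨p, hp⟩ := exists_isGorensteinPoint hv hvG
  obtain ⟨q, hq⟩ := exists_isGorensteinPoint hw hwG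
  have prod_point := hp.prod hq
  rw [← coneLattice_comap_joinEquiv] at prod_point
  have join_point := prod_point.map
  rw [← homogenize_comp_joinVertices] at join_point
  rw [freeJoin_convexHull_range]
  exact join_point.isGorenstein

end FreeJoin

lemma IsLatticePolytope.exists_eq_convexHull_range {d : ℕ} {P : Set (Fin d → ℝ)}
    (hP : IsLatticePolytope P) :
    ∃ (ι : Type) (_ : Fintype ι) (_ : Nonempty ι) (v : ι → Fin d → ℝ),
      (∀ i, IsLatticePt (v i)) ∧ P = convexHull ℝ (Set.range v) := by
  obtain ⟨V, hV_ne, hV, rfl⟩ := hP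
  exact ⟨V, inferInstance, hV_ne.to_subtype, (↑), fun i => hV i i.2, by simp⟩

/-- The free join of two Gorenstein polytopes of degrees `s₁` and `s₂` is a Gorenstein
polytope of degree `s₁ + s₂`. -/
theorem stmt19 {m n s₁ s₂ : ℕ} (F : Set (Fin m → ℝ)) (G : Set (Fin n → ℝ))
    (hF : IsLatticePolytope F) (hG : IsLatticePolytope G)
    (hFGor : IsGorenstein F) (hGGor : IsGorenstein G)
    (h₁ : polyDeg F = s₁) (h₂ : polyDeg G = s₂) :
    IsGorenstein (freeJoin F G) ∧ polyDeg (freeJoin F G) = s₁ + s₂ := by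
  obtain ⟨ι, _, _, v, hv, rfl⟩ := hF.exists_eq_convexHull_range
  obtain ⟨κ, _, _, w, hw, rfl⟩ := hG.exists_eq_convexHull_range
  refine ⟨isGorenstein_freeJoin_convexHull_range hv hw hFGor hGGor, ?_⟩
  -- Since `codeg ≤ dim + 1`, no subtraction in `polyDeg` is truncated.
  have hcodeg_F := polyCodeg_convexHull_range_le hv
  have hcodeg_G := polyCodeg_convexHull_range_le hw
  rw [polyDeg] at h₁ h₂ ⊢
  rw [polyDim_freeJoin_convexHull_range, polyCodeg_freeJoin_convexHull_range hv hw]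
  lia
end
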